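/- arXiv:1404.2214 — 2 statements merged into one kernel-verified Lean document; each statement's English description precedes it below -/
import Mathlib

section
/- (Fourth-power velocity estimate.) For all positive constants μ, κ, R, c_v and all M, m > 0 and K ≥ 1 there exists a constant C > 0, depending only on μ, κ, R, c_v, M, m, K, such that: whenever (v,u,θ) is a classical solution of the one-dimensional compressible Navier–Stokes system on ℝ whose initial data are (M,m)-bounded and which is K-volume-bounded, then for every T > 0: sup_{0 ≤ t ≤ T} ∫_ℝ u(x,t)⁴ dx + ∫₀^T ∫_ℝ u(x,t)² u_x(x,t)² dx dt ≤ C + C ∫₀^T ∫_ℝ u_x(x,t)² dx dt + C ∫₀^T sup_{x ∈ ℝ} ((θ(x,t) − 3/2)₊)² dt. -/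
/-!
The velocity `u` satisfies `u_t = S_x` with the effective stress `S = μ u_x / v - R (θ / v - 1)`.
Multiplying by `4 u³` and integrating by parts gives
`d/dt ∫ u⁴ = -12 μ ∫ u² u_x² / v + 12 R ∫ u² u_x (θ - v) / v`.
Split `θ - v = (θ - 3/2)₊ + w` with `w = min θ (3/2) - v`. The first part is absorbed by Young's
inequality into the dissipation, at the cost of `sup (θ - 3/2)₊² ∫ u²`. For the second part,
`2 u² |u_x| |w| ≤ u_x² + u⁴ w²` and the Sobolev inequality `sup u⁴ ≤ 4 ∫ u² ∫ u_x²` leave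
`(1 + 4 ∫ u² ∫ w²) ∫ u_x²`.

The quantities `∫ u²` and `∫ w²` are bounded, uniformly in time and in terms of the data, by the
basic energy `∫ (u²/2 + R (v - 1 - log v) + c_v (θ - 1 - log θ))`, which is nonincreasing
(`IsClassicalSolution.energy_le`); the lower bound `y - 1 - log y ≥ (√y - 1)²` makes the comparison
explicit, and the truncation at `3/2` makes `w` square integrable with a bound independent of `θ`.

These computations are justified as follows. On each slab `ℝ × [0, T]` the equations express `u_t`
and `θ_t` through functions in `L²`, so that they are square integrable there
(`IsClassicalSolution.sut`, `IsClassicalSolution.sθt`), and spatial integrals can be differentiated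
in time through Fubini's theorem (`integral_time_increment`). A positive lower bound of `θ` on the
slab (`IsClassicalSolution.exists_lower`), which may depend on the solution and on `T`, makes
`log θ` and `1 - 1/θ` admissible in the energy identity; it does not enter the final constant.

Naming of the auxiliary facts about a solution: the prefixes `d`, `c`, `j`, `m`, `s` stand for a
spatial derivative, spatial continuity, joint measurability, membership in `L²(ℝ)` at a fixed time,
and square integrability on the slab, and are followed by the name of the function concerned.
-/

open MeasureTheory Filter Set

noncomputable section

/-- Partial derivative in the spatial variable. -/
def pdx (f : ℝ → ℝ → ℝ) (x t : ℝ) : ℝ := deriv (fun y => f y t) x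

/-- Partial derivative in the time variable. -/
def pdt (f : ℝ → ℝ → ℝ) (x t : ℝ) : ℝ := deriv (fun s => f x s) t

/-- The `L²(ℝ)` norm, valued in `ℝ≥0∞`. -/
def L2 (f : ℝ → ℝ) : ENNReal := eLpNorm f 2 volume

/-- The `H¹(ℝ)` norm, valued in `ℝ≥0∞`. -/
def H1 (f : ℝ → ℝ) : ENNReal := L2 f + L2 (deriv f)

/-- The `H²(ℝ)` norm, valued in `ℝ≥0∞`. -/
def H2 (f : ℝ → ℝ) : ENNReal := L2 f + L2 (deriv f) + L2 (deriv (deriv f))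

/-- A classical solution of the 1-D compressible Navier–Stokes system in Lagrangian
coordinates on `ℝ`, together with the regularity and far-field conditions. -/
structure IsClassicalSolution (μ κ R cv : ℝ) (v u θ : ℝ → ℝ → ℝ) : Prop where
  v_pos : ∀ x t : ℝ, 0 ≤ t → 0 < v x t
  θ_pos : ∀ x t : ℝ, 0 ≤ t → 0 < θ x t
  smooth_x_v : ∀ t : ℝ, 0 ≤ t → ContDiff ℝ 2 (fun x => v x t)
  smooth_x_u : ∀ t : ℝ, 0 ≤ t → ContDiff ℝ 2 (fun x => u x t)
  smooth_x_θ : ∀ t : ℝ, 0 ≤ t → ContDiff ℝ 2 (fun x => θ x t)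
  smooth_t_v : ∀ x t : ℝ, 0 ≤ t → DifferentiableAt ℝ (fun s => v x s) t
  smooth_t_u : ∀ x t : ℝ, 0 ≤ t → DifferentiableAt ℝ (fun s => u x s) t
  smooth_t_θ : ∀ x t : ℝ, 0 ≤ t → DifferentiableAt ℝ (fun s => θ x s) t
  eq_mass : ∀ x t : ℝ, 0 ≤ t → pdt v x t = pdx u x t
  eq_momentum : ∀ x t : ℝ, 0 ≤ t →
    pdt u x t + pdx (fun y s => R * θ y s / v y s) x t
      = μ * pdx (fun y s => pdx u y s / v y s) x t
  eq_energy : ∀ x t : ℝ, 0 ≤ t →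
    cv * pdt θ x t + (R * θ x t / v x t) * pdx u x t
      = κ * pdx (fun y s => pdx θ y s / v y s) x t + μ * (pdx u x t) ^ 2 / v x t
  reg_H1 : ∀ T : ℝ, 0 ≤ T → ∃ B : ℝ, ∀ t ∈ Icc (0 : ℝ) T,
    H1 (fun x => v x t - 1) + H1 (fun x => u x t) + H1 (fun x => θ x t - 1)
      ≤ ENNReal.ofReal B
  reg_H2 : ∀ T : ℝ, 0 < T →
    (∫⁻ t in Icc (0 : ℝ) T,
      (H2 (fun x => u x t) ^ 2 + H2 (fun x => θ x t - 1) ^ 2)) < ⊤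
  farfield_v : ∀ t : ℝ, 0 ≤ t → Tendsto (fun x => v x t) (cocompact ℝ) (nhds 1)
  farfield_u : ∀ t : ℝ, 0 ≤ t → Tendsto (fun x => u x t) (cocompact ℝ) (nhds 0)
  farfield_θ : ∀ t : ℝ, 0 ≤ t → Tendsto (fun x => θ x t) (cocompact ℝ) (nhds 1)

/-- The initial data of `(v, u, θ)` are `(M, m)`-bounded. -/
def InitBounded (M m : ℝ) (v u θ : ℝ → ℝ → ℝ) : Prop :=
  H1 (fun x => v x 0 - 1) + H1 (fun x => u x 0) + H1 (fun x => θ x 0 - 1)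
      ≤ ENNReal.ofReal M
    ∧ (∀ x : ℝ, m ≤ v x 0) ∧ (∀ x : ℝ, m ≤ θ x 0)

/-- The solution is `K`-volume-bounded. -/
def VolBounded (K : ℝ) (v : ℝ → ℝ → ℝ) : Prop :=
  ∀ x t : ℝ, 0 ≤ t → K⁻¹ ≤ v x t ∧ v x t ≤ K

end

/-! ### Functions on the line -/

lemma sq_eLpNorm_two {α : Type*} [MeasurableSpace α] (ν : Measure α) (f : α → ℝ) :
    eLpNorm f 2 ν ^ 2 = ∫⁻ x, ‖f x‖ₑ ^ 2 ∂ν := by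
  rw [eLpNorm_eq_lintegral_rpow_enorm_toReal two_ne_zero ENNReal.ofNat_ne_top]
  simp only [ENNReal.toReal_ofNat, ENNReal.rpow_ofNat, one_div]
  rw [← ENNReal.rpow_natCast, ← ENNReal.rpow_mul]
  simp

lemma memLp_two_of_lintegral {α : Type*} [MeasurableSpace α] {ν : Measure α} {f : α → ℝ}
    (hf : AEStronglyMeasurable f ν) (h : ∫⁻ x, ‖f x‖ₑ ^ 2 ∂ν < ⊤) : MemLp f 2 ν := by
  refine ⟨hf, ?_⟩
  rw [← sq_eLpNorm_two] at h
  exact lt_top_iff_ne_top.2 fun hh => by simp [hh] at h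

lemma lintegral_sq_eq_ofReal {α : Type*} [MeasurableSpace α] {ν : Measure α} {f : α → ℝ}
    (hf : MemLp f 2 ν) : ∫⁻ x, ‖f x‖ₑ ^ 2 ∂ν = ENNReal.ofReal (∫ x, f x ^ 2 ∂ν) := by
  rw [ofReal_integral_eq_lintegral_ofReal hf.integrable_sq (ae_of_all _ fun x => sq_nonneg _)]
  refine lintegral_congr fun x => ?_
  rw [← enorm_pow, Real.enorm_eq_ofReal (sq_nonneg _)]

/-- The one-dimensional Sobolev (Agmon) inequality `f(x)² ≤ 2 ∫ |f f'|`. -/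
lemma sq_le_integral_abs {f f' : ℝ → ℝ} (hd : ∀ x, HasDerivAt f (f' x) x)
    (hf : MemLp f 2 volume) (hf' : MemLp f' 2 volume) (x : ℝ) :
    f x ^ 2 ≤ 2 * ∫ y, |f y * f' y| := by
  have hi : Integrable (fun y => f y * f' y) := hf.integrable_mul hf'
  have hd2 : ∀ y, HasDerivAt (fun z => f z ^ 2) (2 * (f y * f' y)) y := by
    intro y
    have := (hd y).pow 2
    refine this.congr_deriv ?_
    simp; ring
  have hi2 : Integrable (fun y => 2 * (f y * f' y)) := hi.const_mul 2
  have ht := tendsto_zero_of_hasDerivAt_of_integrableOn_Iic (a := x) (fun y _ => hd2 y)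
    hi2.integrableOn hf.integrable_sq.integrableOn
  have h := integral_Iic_of_hasDerivAt_of_tendsto (a := x)
    (hd2 x).continuousAt.continuousWithinAt (fun y _ => hd2 y) hi2.integrableOn ht
  have h1 : f x ^ 2 ≤ ∫ y in Iic x, 2 * |f y * f' y| := by
    rw [sub_zero] at h
    rw [← h]
    exact setIntegral_mono hi2.integrableOn (hi.abs.const_mul 2).integrableOn
      fun y => mul_le_mul_of_nonneg_left (le_abs_self _) (by norm_num)
  refine h1.trans ?_
  rw [← integral_const_mul]
  exact setIntegral_le_integral (hi.abs.const_mul 2) (ae_of_all _ fun y => by positivity)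

lemma sq_le_H1 {f f' : ℝ → ℝ} (hd : ∀ x, HasDerivAt f (f' x) x)
    (hf : MemLp f 2 volume) (hf' : MemLp f' 2 volume) (x : ℝ) :
    f x ^ 2 ≤ (∫ y, f y ^ 2) + ∫ y, f' y ^ 2 := by
  refine (sq_le_integral_abs hd hf hf' x).trans ?_
  rw [← integral_const_mul, ← integral_add hf.integrable_sq hf'.integrable_sq]
  refine integral_mono ((hf.integrable_mul hf').abs.const_mul 2)
    (hf.integrable_sq.add hf'.integrable_sq) fun y => ?_
  simp only [abs_mul]
  nlinarith [sq_nonneg (|f y| - |f' y|), sq_abs (f y), sq_abs (f' y)]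

/-- The multiplicative Agmon inequality `f(x)⁴ ≤ 4 ‖f‖² ‖f'‖²`. -/
lemma pow_four_le_mul {f f' : ℝ → ℝ} (hd : ∀ x, HasDerivAt f (f' x) x)
    (hf : MemLp f 2 volume) (hf' : MemLp f' 2 volume) (x : ℝ) :
    (f x ^ 2) ^ 2 ≤ 4 * ((∫ y, f y ^ 2) * ∫ y, f' y ^ 2) := by
  have h := sq_le_integral_abs hd hf hf' x
  set c := ∫ y, |f y * f' y| with hc
  -- Cauchy–Schwarz through the discriminant of `s ↦ ∫ (s |f| - |f'|)²`.
  have hq : ∀ s : ℝ, 0 ≤ (∫ y, f y ^ 2) * (s * s) + (-2 * c) * s + ∫ y, f' y ^ 2 := by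
    intro s
    have hi : Integrable fun y => |f y * f' y| := (hf.integrable_mul hf').abs
    have i1 : Integrable fun y => f y ^ 2 * (s * s) := hf.integrable_sq.mul_const _
    have i2 : Integrable fun y => (-2 * s) * |f y * f' y| := hi.const_mul _
    have i3 : Integrable fun y => f y ^ 2 * (s * s) + (-2 * s) * |f y * f' y| := i1.add i2
    have h0 : 0 ≤ ∫ y, (f y ^ 2 * (s * s) + (-2 * s) * |f y * f' y| + f' y ^ 2) := by
      refine integral_nonneg fun y => ?_
      simp only [Pi.zero_apply, abs_mul]
      nlinarith [sq_nonneg (s * |f y| - |f' y|), sq_abs (f y), sq_abs (f' y)]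
    rw [integral_add i3 hf'.integrable_sq, integral_add i1 i2, integral_mul_const,
      integral_const_mul] at h0
    linarith
  have hdis := discrim_le_zero hq
  rw [discrim] at hdis
  have : (f x ^ 2) ^ 2 ≤ (2 * c) ^ 2 := pow_le_pow_left₀ (sq_nonneg _) h 2
  nlinarith

/-- Version of `sq_le_H1` for lower integrals, with no integrability hypothesis. -/
lemma enorm_sq_le_lintegral {f f' : ℝ → ℝ} (hd : ∀ x, HasDerivAt f (f' x) x) (x : ℝ) :
    ‖f x‖ₑ ^ 2 ≤ (∫⁻ y, ‖f y‖ₑ ^ 2) + ∫⁻ y, ‖f' y‖ₑ ^ 2 := by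
  rcases eq_top_or_lt_top (∫⁻ y, ‖f y‖ₑ ^ 2) with h | h
  · simp [h]
  rcases eq_top_or_lt_top (∫⁻ y, ‖f' y‖ₑ ^ 2) with h' | h'
  · simp [h']
  have hc : Continuous f := continuous_iff_continuousAt.2 fun x => (hd x).continuousAt
  have hm : Measurable f' := by
    rw [show f' = deriv f from funext fun x => (hd x).deriv.symm]; exact measurable_deriv f
  have h1 := memLp_two_of_lintegral hc.aestronglyMeasurable h
  have h2 := memLp_two_of_lintegral hm.aestronglyMeasurable h'
  rw [lintegral_sq_eq_ofReal h1, lintegral_sq_eq_ofReal h2, ← ENNReal.ofReal_add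
    (integral_nonneg fun _ => sq_nonneg _) (integral_nonneg fun _ => sq_nonneg _), ← enorm_pow,
    Real.enorm_eq_ofReal (sq_nonneg _)]
  exact ENNReal.ofReal_le_ofReal (sq_le_H1 hd h1 h2 x)

/-- Integration by parts on the line for `H¹` functions. -/
lemma integral_by_parts {f f' g g' : ℝ → ℝ} (hf : ∀ x, HasDerivAt f (f' x) x)
    (hg : ∀ x, HasDerivAt g (g' x) x) (mf : MemLp f 2 volume) (mf' : MemLp f' 2 volume)
    (mg : MemLp g 2 volume) (mg' : MemLp g' 2 volume) :
    ∫ x, f x * g' x = -∫ x, f' x * g x :=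
  integral_mul_deriv_eq_deriv_mul_of_integrable (fun x _ => hf x) (fun x _ => hg x)
    (mf.integrable_mul mg') (mf'.integrable_mul mg) (mf.integrable_mul mg)

/-! ### Functions on the slab `ℝ × [0, T]` -/

/-- Lebesgue measure on the slab `ℝ × [0, T]`, space being the first coordinate. -/
noncomputable def slab (T : ℝ) : Measure (ℝ × ℝ) :=
  (volume : Measure ℝ).prod (volume.restrict (Icc 0 T))

/-- Joint measurability of `f` on `ℝ × [0, ∞)`: times `t < 0` are replaced by `0`, so that values of
`f` at negative times play no role. -/
def JointMeas (f : ℝ → ℝ → ℝ) : Prop := Measurable fun p : ℝ × ℝ => f p.1 (max p.2 0)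

/-- `f` is square integrable on the slab `ℝ × [0, T]`. -/
def SqInt (T : ℝ) (f : ℝ → ℝ → ℝ) : Prop := MemLp (fun p : ℝ × ℝ => f p.1 p.2) 2 (slab T)

/-- A Carathéodory argument: separate continuity suffices for joint measurability. -/
lemma JointMeas.of_continuous {f : ℝ → ℝ → ℝ} (hx : ∀ t, 0 ≤ t → Continuous fun x => f x t)
    (ht : ∀ x t, 0 ≤ t → ContinuousAt (fun s => f x s) t) : JointMeas f := by
  have h : Measurable (Function.uncurry fun (x t : ℝ) => f x (max t 0)) := by
    refine measurable_uncurry_of_continuous_of_measurable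
      (fun t => hx _ (le_max_right _ _)) fun x => Continuous.measurable ?_
    refine continuous_iff_continuousAt.2 fun t => ?_
    exact ContinuousAt.comp (f := fun t : ℝ => max t 0) (ht x (max t 0) (le_max_right _ _))
      (by fun_prop)
  exact h

lemma JointMeas.pdx {f : ℝ → ℝ → ℝ} (hf : JointMeas f)
    (hd : ∀ t, 0 ≤ t → Differentiable ℝ fun x => f x t) : JointMeas (pdx f) := by
  have hlim : Tendsto (fun n : ℕ => (1 : ℝ) / ((n : ℝ) + 1)) atTop (nhdsWithin 0 {0}ᶜ) := by
    refine tendsto_nhdsWithin_iff.2 ⟨tendsto_one_div_add_atTop_nhds_zero_nat, ?_⟩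
    exact Eventually.of_forall fun n => by
      have : (0 : ℝ) < 1 / ((n : ℝ) + 1) := by positivity
      exact this.ne'
  refine measurable_of_tendsto_metrizable (f := fun (n : ℕ) (p : ℝ × ℝ) =>
    ((1 : ℝ) / ((n : ℝ) + 1))⁻¹ * (f (p.1 + 1 / ((n : ℝ) + 1)) (max p.2 0) - f p.1 (max p.2 0)))
    (fun n => ?_) ?_
  · have h1 : Measurable fun p : ℝ × ℝ => f (p.1 + 1 / ((n : ℝ) + 1)) (max p.2 0) :=
      Measurable.comp (g := fun p : ℝ × ℝ => f p.1 (max p.2 0)) hf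
        (f := fun p : ℝ × ℝ => (p.1 + 1 / ((n : ℝ) + 1), p.2)) (by fun_prop)
    exact (h1.sub hf).const_mul _
  · refine tendsto_pi_nhds.2 fun p => ?_
    have := ((hd (max p.2 0) (le_max_right _ _)) p.1).hasDerivAt.tendsto_slope_zero
    exact this.comp hlim

lemma JointMeas.congr {f g : ℝ → ℝ → ℝ} (hf : JointMeas f)
    (h : ∀ x t, 0 ≤ t → g x t = f x t) : JointMeas g := by
  have : (fun p : ℝ × ℝ => g p.1 (max p.2 0)) = fun p => f p.1 (max p.2 0) :=
    funext fun p => h _ _ (le_max_right _ _)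
  unfold JointMeas; rw [this]; exact hf

lemma ae_slab {T : ℝ} {P : ℝ → ℝ → Prop} (h : ∀ x, ∀ t ∈ Icc (0 : ℝ) T, P x t) :
    ∀ᵐ p ∂slab T, P p.1 p.2 := by
  have : slab T = ((volume : Measure ℝ).prod volume).restrict (univ ×ˢ Icc 0 T) := by
    rw [slab, ← Measure.prod_restrict, Measure.restrict_univ]
  rw [this]
  exact ae_restrict_of_forall_mem (MeasurableSet.univ.prod measurableSet_Icc)
    fun p hp => h p.1 p.2 hp.2

lemma JointMeas.aestronglyMeasurable {f : ℝ → ℝ → ℝ} (hf : JointMeas f) (T : ℝ) :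
    AEStronglyMeasurable (fun p : ℝ × ℝ => f p.1 p.2) (slab T) := by
  have h : Measurable fun p : ℝ × ℝ => f p.1 (max p.2 0) := hf
  refine h.aestronglyMeasurable.congr ?_
  exact ae_slab (P := fun x t => f x (max t 0) = f x t) fun x t ht => by rw [max_eq_left ht.1]

lemma lintegral_slab {f : ℝ → ℝ → ℝ} (hf : JointMeas f) (T : ℝ) :
    ∫⁻ p, ‖f p.1 p.2‖ₑ ^ 2 ∂slab T = ∫⁻ t in Icc 0 T, ∫⁻ x, ‖f x t‖ₑ ^ 2 :=
  lintegral_prod_symm _ ((hf.aestronglyMeasurable T).aemeasurable.enorm.pow_const 2)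

lemma JointMeas.measurable_lintegral {f : ℝ → ℝ → ℝ} (hf : JointMeas f) :
    Measurable fun t => ∫⁻ x, ‖f x (max t 0)‖ₑ ^ 2 := by
  have h : Measurable fun p : ℝ × ℝ => ‖f p.1 (max p.2 0)‖ₑ ^ 2 := (Measurable.enorm hf).pow_const 2
  exact h.lintegral_prod_left'

lemma JointMeas.aemeasurable_lintegral {f : ℝ → ℝ → ℝ} (hf : JointMeas f) (T : ℝ) :
    AEMeasurable (fun t => ∫⁻ x, ‖f x t‖ₑ ^ 2) (volume.restrict (Icc 0 T)) := by
  refine ⟨_, hf.measurable_lintegral, ?_⟩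
  exact ae_restrict_of_forall_mem measurableSet_Icc fun t ht => by simp only [max_eq_left ht.1]

lemma SqInt.of_lintegral {f : ℝ → ℝ → ℝ} {T : ℝ} (hf : JointMeas f)
    (h : ∫⁻ t in Icc 0 T, ∫⁻ x, ‖f x t‖ₑ ^ 2 < ⊤) : SqInt T f :=
  memLp_two_of_lintegral (hf.aestronglyMeasurable T) (by rwa [lintegral_slab hf])

lemma SqInt.lintegral_lt_top {f : ℝ → ℝ → ℝ} {T : ℝ} (hf : JointMeas f) (h : SqInt T f) :
    ∫⁻ t in Icc 0 T, ∫⁻ x, ‖f x t‖ₑ ^ 2 < ⊤ := by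
  rw [← lintegral_slab hf, ← sq_eLpNorm_two]
  exact ENNReal.pow_lt_top h.2

lemma SqInt.of_bound {f : ℝ → ℝ → ℝ} {T B : ℝ} (hf : JointMeas f)
    (h : ∀ t ∈ Icc (0 : ℝ) T, eLpNorm (fun x => f x t) 2 volume ≤ ENNReal.ofReal B) :
    SqInt T f := by
  refine SqInt.of_lintegral hf ?_
  calc ∫⁻ t in Icc 0 T, ∫⁻ x, ‖f x t‖ₑ ^ 2 ≤ ∫⁻ t in Icc (0 : ℝ) T, ENNReal.ofReal B ^ 2 := by
        refine setLIntegral_mono measurable_const fun t ht => ?_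
        rw [← sq_eLpNorm_two]
        exact pow_le_pow_left' (h t ht) 2
    _ < ⊤ := by simp [ENNReal.mul_lt_top_iff]

/-- The product of a function in `L²(0,T;H¹)` and a function in `L^∞(0,T;L²)` is in `L²`. -/
lemma SqInt.mul_of_bound {f g : ℝ → ℝ → ℝ} {T B : ℝ} (jf : JointMeas f) (jg : JointMeas g)
    (hd : ∀ t, 0 ≤ t → Differentiable ℝ fun x => f x t) (hf : SqInt T f) (hf' : SqInt T (pdx f))
    (h : ∀ t ∈ Icc (0 : ℝ) T, eLpNorm (fun x => g x t) 2 volume ≤ ENNReal.ofReal B) :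
    SqInt T fun x t => f x t * g x t := by
  have jfx := jf.pdx hd
  refine SqInt.of_lintegral (Measurable.mul jf jg) ?_
  calc ∫⁻ t in Icc 0 T, ∫⁻ x, ‖f x t * g x t‖ₑ ^ 2
      ≤ ∫⁻ t in Icc (0 : ℝ) T, ((∫⁻ x, ‖f x t‖ₑ ^ 2) + ∫⁻ x, ‖pdx f x t‖ₑ ^ 2)
          * ENNReal.ofReal B ^ 2 := by
        refine setLIntegral_mono' measurableSet_Icc fun t ht => ?_
        calc ∫⁻ x, ‖f x t * g x t‖ₑ ^ 2
            ≤ ∫⁻ x, ((∫⁻ x, ‖f x t‖ₑ ^ 2) + ∫⁻ x, ‖pdx f x t‖ₑ ^ 2) * ‖g x t‖ₑ ^ 2 := by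
              refine lintegral_mono fun x => ?_
              rw [enorm_mul, mul_pow]
              gcongr
              exact enorm_sq_le_lintegral (fun x => (hd t ht.1 x).hasDerivAt) x
          _ ≤ _ := by
              have hm : Measurable fun x => ‖g x t‖ₑ ^ 2 := by
                have : Measurable fun x => g x (max t 0) :=
                  Measurable.comp (g := fun p : ℝ × ℝ => g p.1 (max p.2 0)) jg
                    (f := fun x => (x, t)) (by fun_prop)
                rw [max_eq_left ht.1] at this
                exact this.enorm.pow_const 2
              rw [lintegral_const_mul _ hm, ← sq_eLpNorm_two volume (fun x => g x t)]
              gcongr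
              exact h t ht
    _ < ⊤ := by
        rw [lintegral_mul_const' _ _ (by simp), lintegral_add_left' (jf.aemeasurable_lintegral T)]
        exact ENNReal.mul_lt_top (ENNReal.add_lt_top.2
          ⟨hf.lintegral_lt_top jf, hf'.lintegral_lt_top jfx⟩) (by simp)

lemma SqInt.of_le {f g : ℝ → ℝ → ℝ} {T c : ℝ} (hf : SqInt T f) (jg : JointMeas g)
    (h : ∀ x, ∀ t ∈ Icc (0 : ℝ) T, |g x t| ≤ c * |f x t|) : SqInt T g :=
  MemLp.of_le_mul hf (jg.aestronglyMeasurable T) (ae_slab h)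

lemma SqInt.congr {f g : ℝ → ℝ → ℝ} {T : ℝ} (hf : SqInt T f)
    (h : ∀ x, ∀ t ∈ Icc (0 : ℝ) T, f x t = g x t) : SqInt T g :=
  (memLp_congr_ae (ae_slab (P := fun x t => f x t = g x t) h)).1 hf

lemma SqInt.add {f g : ℝ → ℝ → ℝ} {T : ℝ} (hf : SqInt T f) (hg : SqInt T g) :
    SqInt T fun x t => f x t + g x t := MemLp.add hf hg

lemma SqInt.sub {f g : ℝ → ℝ → ℝ} {T : ℝ} (hf : SqInt T f) (hg : SqInt T g) :
    SqInt T fun x t => f x t - g x t := MemLp.sub hf hg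

lemma SqInt.const_mul {f : ℝ → ℝ → ℝ} {T : ℝ} (hf : SqInt T f) (c : ℝ) :
    SqInt T fun x t => c * f x t := MemLp.const_mul hf c

lemma SqInt.integrable_mul {f g : ℝ → ℝ → ℝ} {T : ℝ} (hf : SqInt T f) (hg : SqInt T g) :
    Integrable (fun p : ℝ × ℝ => f p.1 p.2 * g p.1 p.2) (slab T) :=
  MemLp.integrable_mul hf hg

lemma SqInt.slice {f : ℝ → ℝ → ℝ} {T : ℝ} (jf : JointMeas f) (hf : SqInt T f) :
    ∀ᵐ t ∂volume.restrict (Icc 0 T), MemLp (fun x => f x t) 2 volume := by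
  have h := (MemLp.integrable_sq hf).prod_left_ae
  filter_upwards [h, ae_restrict_mem measurableSet_Icc] with t ht htm
  refine (memLp_two_iff_integrable_sq ?_).2 ht
  have : Measurable fun x => f x (max t 0) :=
    Measurable.comp (g := fun p : ℝ × ℝ => f p.1 (max p.2 0)) jf (f := fun x => (x, t)) (by fun_prop)
  rw [max_eq_left htm.1] at this
  exact this.aestronglyMeasurable

/-- Conservation law in integrated form: if `F_t = F'` pointwise and `F'` is integrable on the slab,
then `t ↦ ∫ F(x,t) dx` has the increments predicted by differentiating under the integral. -/
lemma integral_time_increment {F F' : ℝ → ℝ → ℝ} {T a b : ℝ} (ha : a ∈ Icc 0 T) (hb : b ∈ Icc 0 T)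
    (hd : ∀ x, ∀ t ∈ Icc (0 : ℝ) T, HasDerivAt (F x) (F' x t) t)
    (hi : Integrable (fun p : ℝ × ℝ => F' p.1 p.2) (slab T))
    (hFa : Integrable fun x => F x a) (hFb : Integrable fun x => F x b) :
    (∫ x, F x b) - ∫ x, F x a = ∫ t in a..b, ∫ x, F' x t := by
  wlog hab : a ≤ b generalizing a b
  · have := this hb ha hFb hFa (le_of_not_ge hab)
    rw [intervalIntegral.integral_symm, ← this]; ring
  have hsub : Ioc a b ⊆ Icc 0 T := fun t ht => ⟨ha.1.trans ht.1.le, ht.2.trans hb.2⟩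
  have hi' : Integrable (Function.uncurry F') ((volume : Measure ℝ).prod
      (volume.restrict (Ioc a b))) := by
    refine hi.mono_measure (ν := slab T) ?_
    exact Measure.prod_mono le_rfl (Measure.restrict_mono hsub le_rfl)
  rw [intervalIntegral.integral_of_le hab, ← integral_integral_swap hi', ← integral_sub hFb hFa]
  refine integral_congr_ae ?_
  filter_upwards [hi'.prod_right_ae] with x hx
  rw [← intervalIntegral.integral_of_le hab]
  refine (intervalIntegral.integral_eq_sub_of_hasDerivAt (fun t ht => hd x t ?_) ?_).symm
  · rw [uIcc_of_le hab] at ht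
    exact ⟨ha.1.trans ht.1, ht.2.trans hb.2⟩
  · exact (intervalIntegrable_iff_integrableOn_Ioc_of_le hab).2 hx

/-! ### Regularity of classical solutions -/

lemma integral_sq_le_of_eLpNorm {f : ℝ → ℝ} {B : ℝ} (hf : MemLp f 2 volume) (hB : 0 ≤ B)
    (h : eLpNorm f 2 volume ≤ ENNReal.ofReal B) : ∫ x, f x ^ 2 ≤ B ^ 2 := by
  have h1 : ENNReal.ofReal (∫ x, f x ^ 2) ≤ ENNReal.ofReal (B ^ 2) := by
    rw [← lintegral_sq_eq_ofReal hf, ← sq_eLpNorm_two, ENNReal.ofReal_pow hB]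
    exact pow_le_pow_left' h 2
  exact (ENNReal.ofReal_le_ofReal_iff (by positivity)).1 h1

/-- The six functions `u, u_x, v - 1, v_x, θ - 1, θ_x` have `L²(ℝ)` norm at most `B` at each time
of `[0, T]`. -/
structure SliceBounds (T B : ℝ) (v u θ : ℝ → ℝ → ℝ) : Prop where
  nonneg : 0 ≤ B
  bu : ∀ t ∈ Icc (0 : ℝ) T, eLpNorm (fun x => u x t) 2 volume ≤ ENNReal.ofReal B
  bux : ∀ t ∈ Icc (0 : ℝ) T, eLpNorm (fun x => pdx u x t) 2 volume ≤ ENNReal.ofReal B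
  bv : ∀ t ∈ Icc (0 : ℝ) T, eLpNorm (fun x => v x t - 1) 2 volume ≤ ENNReal.ofReal B
  bvx : ∀ t ∈ Icc (0 : ℝ) T, eLpNorm (fun x => pdx v x t) 2 volume ≤ ENNReal.ofReal B
  bθ : ∀ t ∈ Icc (0 : ℝ) T, eLpNorm (fun x => θ x t - 1) 2 volume ≤ ENNReal.ofReal B
  bθx : ∀ t ∈ Icc (0 : ℝ) T, eLpNorm (fun x => pdx θ x t) 2 volume ≤ ENNReal.ofReal B

lemma SliceBounds.of_H1 {T B : ℝ} {v u θ : ℝ → ℝ → ℝ} (hB : 0 ≤ B)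
    (h : ∀ t ∈ Icc (0 : ℝ) T, H1 (fun x => v x t - 1) + H1 (fun x => u x t)
      + H1 (fun x => θ x t - 1) ≤ ENNReal.ofReal B) : SliceBounds T B v u θ := by
  have e : ∀ (f : ℝ → ℝ → ℝ) t, deriv (fun x => f x t - 1) = fun x => pdx f x t := by
    intro f t; funext x; exact deriv_sub_const _
  constructor
  · exact hB
  all_goals intro t ht; refine le_trans ?_ (h t ht); unfold H1 L2
  · exact le_add_right (le_add_left (le_add_right le_rfl))
  · exact le_add_right (le_add_left (le_add_left le_rfl))
  · exact le_add_right (le_add_right (le_add_right le_rfl))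
  · rw [e v]; exact le_add_right (le_add_right (le_add_left le_rfl))
  · exact le_add_left (le_add_right le_rfl)
  · rw [e θ]; exact le_add_left (le_add_left le_rfl)

lemma HasDerivAt.div_deriv {f g : ℝ → ℝ} {f' g' x : ℝ} (hf : HasDerivAt f f' x)
    (hg : HasDerivAt g g' x) (h : g x ≠ 0) :
    HasDerivAt (fun y => f y / g y) (f' / g x - f x * g' / g x ^ 2) x := by
  refine (hf.div hg h).congr_deriv ?_
  field_simp

lemma JointMeas.mul {f g : ℝ → ℝ → ℝ} (hf : JointMeas f) (hg : JointMeas g) :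
    JointMeas fun x t => f x t * g x t := Measurable.mul hf hg

lemma JointMeas.div {f g : ℝ → ℝ → ℝ} (hf : JointMeas f) (hg : JointMeas g) :
    JointMeas fun x t => f x t / g x t := Measurable.div hf hg

lemma JointMeas.add {f g : ℝ → ℝ → ℝ} (hf : JointMeas f) (hg : JointMeas g) :
    JointMeas fun x t => f x t + g x t := Measurable.add hf hg

lemma JointMeas.sub {f g : ℝ → ℝ → ℝ} (hf : JointMeas f) (hg : JointMeas g) :
    JointMeas fun x t => f x t - g x t := Measurable.sub hf hg

lemma JointMeas.const_mul {f : ℝ → ℝ → ℝ} (hf : JointMeas f) (c : ℝ) :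
    JointMeas fun x t => c * f x t := Measurable.const_mul hf c

lemma JointMeas.sub_const {f : ℝ → ℝ → ℝ} (hf : JointMeas f) (c : ℝ) :
    JointMeas fun x t => f x t - c := Measurable.sub_const hf c

lemma JointMeas.pow {f : ℝ → ℝ → ℝ} (hf : JointMeas f) (n : ℕ) :
    JointMeas fun x t => f x t ^ n := Measurable.pow_const hf n

namespace IsClassicalSolution

variable {μ κ R cv : ℝ} {v u θ : ℝ → ℝ → ℝ}

lemma sliceBounds (h : IsClassicalSolution μ κ R cv v u θ) {T : ℝ} (hT : 0 ≤ T) :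
    ∃ B, SliceBounds T B v u θ := by
  obtain ⟨B, hB⟩ := h.reg_H1 T hT
  exact ⟨max B 0, SliceBounds.of_H1 (le_max_right _ _) fun t ht =>
    (hB t ht).trans (ENNReal.ofReal_le_ofReal (le_max_left _ _))⟩

lemma du (h : IsClassicalSolution μ κ R cv v u θ) {t : ℝ} (ht : 0 ≤ t) (x : ℝ) :
    HasDerivAt (fun y => u y t) (pdx u x t) x :=
  ((h.smooth_x_u t ht).differentiable (by norm_num) x).hasDerivAt

lemma dv (h : IsClassicalSolution μ κ R cv v u θ) {t : ℝ} (ht : 0 ≤ t) (x : ℝ) :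
    HasDerivAt (fun y => v y t) (pdx v x t) x :=
  ((h.smooth_x_v t ht).differentiable (by norm_num) x).hasDerivAt

lemma dθ (h : IsClassicalSolution μ κ R cv v u θ) {t : ℝ} (ht : 0 ≤ t) (x : ℝ) :
    HasDerivAt (fun y => θ y t) (pdx θ x t) x :=
  ((h.smooth_x_θ t ht).differentiable (by norm_num) x).hasDerivAt

lemma dux (h : IsClassicalSolution μ κ R cv v u θ) {t : ℝ} (ht : 0 ≤ t) :
    Differentiable ℝ (fun y => pdx u y t) :=
  (((h.smooth_x_u t ht).iterate_deriv' 1 1).differentiable (by norm_num))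

lemma dθx (h : IsClassicalSolution μ κ R cv v u θ) {t : ℝ} (ht : 0 ≤ t) :
    Differentiable ℝ (fun y => pdx θ y t) :=
  (((h.smooth_x_θ t ht).iterate_deriv' 1 1).differentiable (by norm_num))

lemma cvx (h : IsClassicalSolution μ κ R cv v u θ) {t : ℝ} (ht : 0 ≤ t) :
    Continuous (fun y => pdx v y t) :=
  (((h.smooth_x_v t ht).iterate_deriv' 1 1).continuous)

lemma cu (h : IsClassicalSolution μ κ R cv v u θ) {t : ℝ} (ht : 0 ≤ t) :
    Continuous (fun y => u y t) := (h.smooth_x_u t ht).continuous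

lemma cv' (h : IsClassicalSolution μ κ R cv v u θ) {t : ℝ} (ht : 0 ≤ t) :
    Continuous (fun y => v y t) := (h.smooth_x_v t ht).continuous

lemma cθ (h : IsClassicalSolution μ κ R cv v u θ) {t : ℝ} (ht : 0 ≤ t) :
    Continuous (fun y => θ y t) := (h.smooth_x_θ t ht).continuous

/-- The momentum equation says that `u_t` is the `x`-derivative of the effective stress
`μ u_x / v - R (θ / v - 1)`. -/
lemma dS (h : IsClassicalSolution μ κ R cv v u θ) {t : ℝ} (ht : 0 ≤ t) (x : ℝ) :
    HasDerivAt (fun y => μ * (pdx u y t / v y t) - R * (θ y t / v y t - 1)) (pdt u x t) x := by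
  have h0 := (h.v_pos x t ht).ne'
  have h1 : HasDerivAt (fun y => pdx u y t / v y t) (pdx (fun y s => pdx u y s / v y s) x t) x :=
    ((h.dux ht x).div (h.dv ht x).differentiableAt h0).hasDerivAt
  have h2 : HasDerivAt (fun y => R * θ y t / v y t) (pdx (fun y s => R * θ y s / v y s) x t) x :=
    (((h.dθ ht x).differentiableAt.const_mul R).div (h.dv ht x).differentiableAt h0).hasDerivAt
  have h3 := ((h1.const_mul μ).sub h2).add_const R
  have e : (fun y => μ * (pdx u y t / v y t) - R * (θ y t / v y t - 1))
      = fun y => (μ * (pdx u y t / v y t) - R * θ y t / v y t) + R := by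
    funext y; ring
  rw [e]
  refine h3.congr_deriv ?_
  linarith [h.eq_momentum x t ht]

/-- The energy equation as a formula for the `x`-derivative of `κ θ_x / v`. -/
lemma dq (h : IsClassicalSolution μ κ R cv v u θ) {t : ℝ} (ht : 0 ≤ t) (x : ℝ) :
    HasDerivAt (fun y => κ * (pdx θ y t / v y t))
      (cv * pdt θ x t + (R * θ x t / v x t) * pdx u x t - μ * (pdx u x t) ^ 2 / v x t) x := by
  have h0 := (h.v_pos x t ht).ne'
  have h1 : HasDerivAt (fun y => pdx θ y t / v y t) (pdx (fun y s => pdx θ y s / v y s) x t) x :=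
    ((h.dθx ht x).div (h.dv ht x).differentiableAt h0).hasDerivAt
  refine (h1.const_mul κ).congr_deriv ?_
  linarith [h.eq_energy x t ht]

lemma pdt_u_eq (h : IsClassicalSolution μ κ R cv v u θ) {t : ℝ} (ht : 0 ≤ t) (x : ℝ) :
    pdt u x t = μ * (pdx (pdx u) x t / v x t - pdx u x t * pdx v x t / v x t ^ 2)
      - R * (pdx θ x t / v x t - θ x t * pdx v x t / v x t ^ 2) := by
  have h0 := (h.v_pos x t ht).ne'
  refine (h.dS ht x).unique ?_
  exact (((h.dux ht x).hasDerivAt.div_deriv (h.dv ht x) h0).const_mul μ).sub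
    ((((h.dθ ht x).div_deriv (h.dv ht x) h0).sub_const 1).const_mul R)

lemma pdt_θ_eq (h : IsClassicalSolution μ κ R cv v u θ) (hcv : 0 < cv) {t : ℝ} (ht : 0 ≤ t)
    (x : ℝ) : pdt θ x t = (κ / cv) * (pdx (pdx θ) x t / v x t)
      - (κ / cv) * (pdx θ x t * pdx v x t / v x t ^ 2)
      - (R / cv) * (θ x t * pdx u x t / v x t) + (μ / cv) * (pdx u x t * pdx u x t / v x t) := by
  have h0 := (h.v_pos x t ht).ne'
  have e := (h.dq ht x).unique
    (((h.dθx ht x).hasDerivAt.div_deriv (h.dv ht x) h0).const_mul κ)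
  have e2 : cv * pdt θ x t = κ * (deriv (fun y => pdx θ y t) x / v x t
      - pdx θ x t * pdx v x t / v x t ^ 2) - (R * θ x t / v x t) * pdx u x t
      + μ * (pdx u x t) ^ 2 / v x t := by linarith
  have e3 : pdt θ x t = (cv * pdt θ x t) / cv := by field_simp
  rw [e3, e2]
  simp only [pdx]
  field_simp

lemma ju (h : IsClassicalSolution μ κ R cv v u θ) : JointMeas u :=
  JointMeas.of_continuous (fun _ ht => h.cu ht) fun x t ht => (h.smooth_t_u x t ht).continuousAt

lemma jv (h : IsClassicalSolution μ κ R cv v u θ) : JointMeas v :=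
  JointMeas.of_continuous (fun _ ht => h.cv' ht) fun x t ht => (h.smooth_t_v x t ht).continuousAt

lemma jθ (h : IsClassicalSolution μ κ R cv v u θ) : JointMeas θ :=
  JointMeas.of_continuous (fun _ ht => h.cθ ht) fun x t ht => (h.smooth_t_θ x t ht).continuousAt

lemma jux (h : IsClassicalSolution μ κ R cv v u θ) : JointMeas (pdx u) :=
  h.ju.pdx fun _ ht x => (h.du ht x).differentiableAt

lemma jvx (h : IsClassicalSolution μ κ R cv v u θ) : JointMeas (pdx v) :=
  h.jv.pdx fun _ ht x => (h.dv ht x).differentiableAt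

lemma jθx (h : IsClassicalSolution μ κ R cv v u θ) : JointMeas (pdx θ) :=
  h.jθ.pdx fun _ ht x => (h.dθ ht x).differentiableAt

lemma juxx (h : IsClassicalSolution μ κ R cv v u θ) : JointMeas (pdx (pdx u)) :=
  h.jux.pdx fun _ ht => h.dux ht

lemma jθxx (h : IsClassicalSolution μ κ R cv v u θ) : JointMeas (pdx (pdx θ)) :=
  h.jθx.pdx fun _ ht => h.dθx ht

lemma jut (h : IsClassicalSolution μ κ R cv v u θ) : JointMeas (pdt u) := by
  refine JointMeas.congr ?_ fun x t ht => h.pdt_u_eq ht x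
  exact (((h.juxx.div h.jv).sub ((h.jux.mul h.jvx).div (h.jv.pow 2))).const_mul μ).sub
    (((h.jθx.div h.jv).sub ((h.jθ.mul h.jvx).div (h.jv.pow 2))).const_mul R)

lemma jθt (h : IsClassicalSolution μ κ R cv v u θ) (hcv : 0 < cv) : JointMeas (pdt θ) := by
  refine JointMeas.congr ?_ fun x t ht => h.pdt_θ_eq hcv ht x
  exact ((((h.jθxx.div h.jv).const_mul _).sub
    (((h.jθx.mul h.jvx).div (h.jv.pow 2)).const_mul _)).sub
    (((h.jθ.mul h.jux).div h.jv).const_mul _)).add (((h.jux.mul h.jux).div h.jv).const_mul _)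

variable {T B K : ℝ}

lemma mu (h : IsClassicalSolution μ κ R cv v u θ) (b : SliceBounds T B v u θ) {t : ℝ}
    (ht : t ∈ Icc 0 T) : MemLp (fun x => u x t) 2 volume :=
  ⟨(h.cu ht.1).aestronglyMeasurable, (b.bu t ht).trans_lt ENNReal.ofReal_lt_top⟩

lemma mux (h : IsClassicalSolution μ κ R cv v u θ) (b : SliceBounds T B v u θ) {t : ℝ}
    (ht : t ∈ Icc 0 T) : MemLp (fun x => pdx u x t) 2 volume :=
  ⟨(h.dux ht.1).continuous.aestronglyMeasurable, (b.bux t ht).trans_lt ENNReal.ofReal_lt_top⟩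

lemma mv (h : IsClassicalSolution μ κ R cv v u θ) (b : SliceBounds T B v u θ) {t : ℝ}
    (ht : t ∈ Icc 0 T) : MemLp (fun x => v x t - 1) 2 volume :=
  ⟨((h.cv' ht.1).sub continuous_const).aestronglyMeasurable,
    (b.bv t ht).trans_lt ENNReal.ofReal_lt_top⟩

lemma mθ (h : IsClassicalSolution μ κ R cv v u θ) (b : SliceBounds T B v u θ) {t : ℝ}
    (ht : t ∈ Icc 0 T) : MemLp (fun x => θ x t - 1) 2 volume :=
  ⟨((h.cθ ht.1).sub continuous_const).aestronglyMeasurable,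
    (b.bθ t ht).trans_lt ENNReal.ofReal_lt_top⟩

lemma mθx (h : IsClassicalSolution μ κ R cv v u θ) (b : SliceBounds T B v u θ) {t : ℝ}
    (ht : t ∈ Icc 0 T) : MemLp (fun x => pdx θ x t) 2 volume :=
  ⟨(h.dθx ht.1).continuous.aestronglyMeasurable, (b.bθx t ht).trans_lt ENNReal.ofReal_lt_top⟩

lemma abs_u_le (h : IsClassicalSolution μ κ R cv v u θ) (b : SliceBounds T B v u θ) {t : ℝ}
    (ht : t ∈ Icc 0 T) (x : ℝ) : |u x t| ≤ 2 * B := by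
  have h1 := sq_le_H1 (h.du ht.1) (h.mu b ht) (h.mux b ht) x
  have h2 := integral_sq_le_of_eLpNorm (h.mu b ht) b.nonneg (b.bu t ht)
  have h3 := integral_sq_le_of_eLpNorm (h.mux b ht) b.nonneg (b.bux t ht)
  refine abs_le_of_sq_le_sq ?_ (by linarith [b.nonneg])
  nlinarith [b.nonneg]

lemma abs_θ_le (h : IsClassicalSolution μ κ R cv v u θ) (b : SliceBounds T B v u θ) {t : ℝ}
    (ht : t ∈ Icc 0 T) (x : ℝ) : |θ x t| ≤ 1 + 2 * B := by
  have h1 := sq_le_H1 (fun x => (h.dθ ht.1 x).sub_const 1) (h.mθ b ht) (h.mθx b ht) x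
  have h2 := integral_sq_le_of_eLpNorm (h.mθ b ht) b.nonneg (b.bθ t ht)
  have h3 := integral_sq_le_of_eLpNorm (h.mθx b ht) b.nonneg (b.bθx t ht)
  have h4 : |θ x t - 1| ≤ 2 * B := by
    refine abs_le_of_sq_le_sq ?_ (by linarith [b.nonneg])
    nlinarith [b.nonneg]
  have := abs_add_le (θ x t - 1) 1
  simp at this
  linarith

lemma su (h : IsClassicalSolution μ κ R cv v u θ) (b : SliceBounds T B v u θ) : SqInt T u :=
  SqInt.of_bound h.ju b.bu

lemma sux (h : IsClassicalSolution μ κ R cv v u θ) (b : SliceBounds T B v u θ) : SqInt T (pdx u) :=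
  SqInt.of_bound h.jux b.bux

lemma sv (h : IsClassicalSolution μ κ R cv v u θ) (b : SliceBounds T B v u θ) :
    SqInt T fun x t => v x t - 1 :=
  SqInt.of_bound (h.jv.sub_const 1) b.bv

lemma svx (h : IsClassicalSolution μ κ R cv v u θ) (b : SliceBounds T B v u θ) : SqInt T (pdx v) :=
  SqInt.of_bound h.jvx b.bvx

lemma sθ (h : IsClassicalSolution μ κ R cv v u θ) (b : SliceBounds T B v u θ) :
    SqInt T fun x t => θ x t - 1 :=
  SqInt.of_bound (h.jθ.sub_const 1) b.bθ

lemma sθx (h : IsClassicalSolution μ κ R cv v u θ) (b : SliceBounds T B v u θ) : SqInt T (pdx θ) :=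
  SqInt.of_bound h.jθx b.bθx

lemma suxx (h : IsClassicalSolution μ κ R cv v u θ) (hT : 0 < T) : SqInt T (pdx (pdx u)) := by
  refine SqInt.of_lintegral h.juxx (lt_of_le_of_lt ?_ (h.reg_H2 T hT))
  refine lintegral_mono fun t => ?_
  rw [← sq_eLpNorm_two volume (fun x => pdx (pdx u) x t)]
  refine le_add_right (pow_le_pow_left' ?_ 2)
  exact le_add_left (a := eLpNorm (fun x => pdx (pdx u) x t) 2 volume) le_rfl

lemma sθxx (h : IsClassicalSolution μ κ R cv v u θ) (hT : 0 < T) : SqInt T (pdx (pdx θ)) := by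
  refine SqInt.of_lintegral h.jθxx (lt_of_le_of_lt ?_ (h.reg_H2 T hT))
  refine lintegral_mono fun t => ?_
  rw [← sq_eLpNorm_two volume (fun x => pdx (pdx θ) x t)]
  refine le_add_left (pow_le_pow_left' ?_ 2)
  have e : deriv (fun x => θ x t - 1) = fun x => pdx θ x t := by
    funext x; exact deriv_sub_const _
  unfold H2 L2
  rw [e]
  exact le_add_left (a := eLpNorm (fun x => pdx (pdx θ) x t) 2 volume) le_rfl

lemma sux_mul (h : IsClassicalSolution μ κ R cv v u θ) (b : SliceBounds T B v u θ) (hT : 0 < T)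
    {g : ℝ → ℝ → ℝ} (jg : JointMeas g)
    (hg : ∀ t ∈ Icc (0 : ℝ) T, eLpNorm (fun x => g x t) 2 volume ≤ ENNReal.ofReal B) :
    SqInt T fun x t => pdx u x t * g x t :=
  SqInt.mul_of_bound h.jux jg (fun _ ht => h.dux ht) (h.sux b) (h.suxx hT) hg

lemma sθx_mul (h : IsClassicalSolution μ κ R cv v u θ) (b : SliceBounds T B v u θ) (hT : 0 < T)
    {g : ℝ → ℝ → ℝ} (jg : JointMeas g)
    (hg : ∀ t ∈ Icc (0 : ℝ) T, eLpNorm (fun x => g x t) 2 volume ≤ ENNReal.ofReal B) :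
    SqInt T fun x t => pdx θ x t * g x t :=
  SqInt.mul_of_bound h.jθx jg (fun _ ht => h.dθx ht) (h.sθx b) (h.sθxx hT) hg

lemma inv_v_le (h : IsClassicalSolution μ κ R cv v u θ) (hK : 1 ≤ K) (hv : VolBounded K v)
    {t : ℝ} (ht : 0 ≤ t) (x : ℝ) : |(v x t)⁻¹| ≤ K := by
  have h0 := h.v_pos x t ht
  rw [abs_of_pos (inv_pos.2 h0)]
  exact inv_le_of_inv_le₀ (by linarith) (hv x t ht).1

lemma s_div (h : IsClassicalSolution μ κ R cv v u θ) (hK : 1 ≤ K) (hv : VolBounded K v)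
    {f : ℝ → ℝ → ℝ} (jf : JointMeas f) (hf : SqInt T f) : SqInt T fun x t => f x t / v x t := by
  refine hf.of_le (c := K) (jf.div h.jv) fun x t ht => ?_
  rw [div_eq_mul_inv, abs_mul, mul_comm]
  exact mul_le_mul_of_nonneg_right (h.inv_v_le hK hv ht.1 x) (abs_nonneg _)

lemma s_θmul (h : IsClassicalSolution μ κ R cv v u θ) (b : SliceBounds T B v u θ)
    {f : ℝ → ℝ → ℝ} (jf : JointMeas f) (hf : SqInt T f) : SqInt T fun x t => θ x t * f x t := by
  refine hf.of_le (c := 1 + 2 * B) (h.jθ.mul jf) fun x t ht => ?_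
  rw [abs_mul]
  exact mul_le_mul_of_nonneg_right (h.abs_θ_le b ht x) (abs_nonneg _)

lemma s_div_sq (h : IsClassicalSolution μ κ R cv v u θ) (hK : 1 ≤ K) (hv : VolBounded K v)
    {f : ℝ → ℝ → ℝ} (jf : JointMeas f) (hf : SqInt T f) :
    SqInt T fun x t => f x t / v x t ^ 2 := by
  refine (h.s_div hK hv (jf.div h.jv) (h.s_div hK hv jf hf)).congr fun x t ht => ?_
  rw [div_div, sq]

/-- `u_t` is square integrable on the slab. -/
lemma sut (h : IsClassicalSolution μ κ R cv v u θ) (b : SliceBounds T B v u θ) (hT : 0 < T)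
    (hK : 1 ≤ K) (hv : VolBounded K v) : SqInt T (pdt u) := by
  refine SqInt.congr ?_ fun x t ht => (h.pdt_u_eq ht.1 x).symm
  exact (((h.s_div hK hv h.juxx (h.suxx hT)).sub (h.s_div_sq hK hv (h.jux.mul h.jvx)
    (h.sux_mul b hT h.jvx b.bvx))).const_mul μ).sub (((h.s_div hK hv h.jθx (h.sθx b)).sub
    (h.s_div_sq hK hv (h.jθ.mul h.jvx) (h.s_θmul b h.jvx (h.svx b)))).const_mul R)

/-- `θ_t` is square integrable on the slab. -/
lemma sθt (h : IsClassicalSolution μ κ R cv v u θ) (b : SliceBounds T B v u θ) (hT : 0 < T)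
    (hcv : 0 < cv) (hK : 1 ≤ K) (hv : VolBounded K v) : SqInt T (pdt θ) := by
  refine SqInt.congr ?_ fun x t ht => (h.pdt_θ_eq hcv ht.1 x).symm
  exact ((((h.s_div hK hv h.jθxx (h.sθxx hT)).const_mul _).sub ((h.s_div_sq hK hv
    (h.jθx.mul h.jvx) (h.sθx_mul b hT h.jvx b.bvx)).const_mul _)).sub
    ((h.s_div hK hv (h.jθ.mul h.jux) (h.s_θmul b h.jux (h.sux b))).const_mul _)).add
    ((h.s_div hK hv (h.jux.mul h.jux) (h.sux_mul b hT h.jux b.bux)).const_mul _)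

end IsClassicalSolution

/-! ### Positive lower bound for the temperature on the slab -/

namespace IsClassicalSolution

variable {μ κ R cv : ℝ} {v u θ : ℝ → ℝ → ℝ} {T B K : ℝ}

lemma exists_lower_slice (h : IsClassicalSolution μ κ R cv v u θ) {t : ℝ} (ht : 0 ≤ t) :
    ∃ c > 0, ∀ x, c ≤ θ x t := by
  by_cases H : ∃ x₀, θ x₀ t ≤ 1 / 2
  · obtain ⟨x₀, hx₀⟩ := H
    have hev : ∀ᶠ x in cocompact ℝ, θ x₀ t ≤ θ x t := by
      filter_upwards [(h.farfield_θ t ht).eventually (lt_mem_nhds (show (1 / 2 : ℝ) < 1 by norm_num))]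
        with x hx
      exact hx₀.trans hx.le
    obtain ⟨x, hx⟩ := (h.cθ ht).exists_forall_le' x₀ hev
    exact ⟨θ x t, h.θ_pos x t ht, hx⟩
  · push Not at H
    exact ⟨1 / 2, by norm_num, fun x => (H x).le⟩

lemma integral_diff_sq_le {f g : ℝ → ℝ} (hB : 0 ≤ B) (mf : MemLp f 2 volume) (mg : MemLp g 2 volume)
    (hf : eLpNorm f 2 volume ≤ ENNReal.ofReal B) (hg : eLpNorm g 2 volume ≤ ENNReal.ofReal B) :
    ∫ x, (f x - g x) ^ 2 ≤ 4 * B ^ 2 := by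
  have h1 := integral_sq_le_of_eLpNorm mf hB hf
  have h2 := integral_sq_le_of_eLpNorm mg hB hg
  have h3 : ∫ x, (f x - g x) ^ 2 ≤ ∫ x, (2 * f x ^ 2 + 2 * g x ^ 2) := by
    refine integral_mono (mf.sub mg).integrable_sq
      ((mf.integrable_sq.const_mul 2).add (mg.integrable_sq.const_mul 2)) fun x => ?_
    simp only
    nlinarith [sq_nonneg (f x + g x)]
  rw [integral_add (mf.integrable_sq.const_mul 2) (mg.integrable_sq.const_mul 2),
    integral_const_mul, integral_const_mul] at h3
  linarith

/-- `t ↦ θ(·, t)` is continuous in the sup norm: the `L²` norm of the increment is controlled by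
`θ_t ∈ L²`, and interpolation with the `H¹` bound upgrades this to the sup norm. -/
lemma eventually_abs_sub_le (h : IsClassicalSolution μ κ R cv v u θ) (b : SliceBounds T B v u θ)
    (hT : 0 < T) (hcv : 0 < cv) (hK : 1 ≤ K) (hv : VolBounded K v) {t₀ : ℝ} (ht₀ : t₀ ∈ Icc 0 T)
    {ε : ℝ} (hε : 0 < ε) :
    ∀ᶠ s in nhdsWithin t₀ (Icc 0 T), ∀ x, |θ x s - θ x t₀| ≤ ε := by
  have j0 : JointMeas fun x _ => θ x t₀ - 1 :=
    (((h.cθ ht₀.1).sub continuous_const).comp continuous_fst).measurable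
  have s0 : SqInt T fun x _ => θ x t₀ - 1 := SqInt.of_bound j0 fun _ _ => b.bθ t₀ ht₀
  have s1 : SqInt T fun x t => θ x t - θ x t₀ :=
    ((h.sθ b).sub s0).congr fun x t _ => by ring
  have hi := s1.integrable_mul ((h.sθt b hT hcv hK hv).const_mul 2)
  have mF : ∀ s ∈ Icc (0 : ℝ) T, MemLp (fun x => θ x s - θ x t₀) 2 volume := by
    intro s hs
    refine ((h.mθ b hs).sub (h.mθ b ht₀)).ae_eq (ae_of_all _ fun x => ?_)
    simp
  have key : ∀ s ∈ Icc (0 : ℝ) T, ∫ x, (θ x s - θ x t₀) ^ 2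
      = ∫ t in t₀..s, ∫ x, (θ x t - θ x t₀) * (2 * pdt θ x t) := by
    intro s hs
    have := integral_time_increment (F := fun x t => (θ x t - θ x t₀) ^ 2)
      (F' := fun x t => (θ x t - θ x t₀) * (2 * pdt θ x t)) ht₀ hs
      (fun x t ht => by
        have := ((h.smooth_t_θ x t ht.1).hasDerivAt.sub_const (θ x t₀)).pow 2
        refine this.congr_deriv ?_
        simp [pdt]; ring) hi (mF t₀ ht₀).integrable_sq (mF s hs).integrable_sq
    simpa using this
  have hprim : IntervalIntegrable (fun t => ∫ x, (θ x t - θ x t₀) * (2 * pdt θ x t)) volume 0 T := by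
    rw [intervalIntegrable_iff_integrableOn_Icc_of_le hT.le]
    exact hi.integral_prod_right
  have hcont := intervalIntegral.continuousOn_primitive_interval' hprim
    (a := t₀) (by rwa [uIcc_of_le hT.le])
  rw [uIcc_of_le hT.le] at hcont
  have hlim := hcont t₀ ht₀
  unfold ContinuousWithinAt at hlim
  simp only [intervalIntegral.integral_same] at hlim
  have hlim2 := hlim.const_mul (16 * B ^ 2)
  rw [mul_zero] at hlim2
  filter_upwards [hlim2.eventually (gt_mem_nhds (show (0 : ℝ) < (ε ^ 2) ^ 2 by positivity)),
    self_mem_nhdsWithin] with s hs hsm x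
  rw [← key s hsm] at hs
  have mF' : MemLp (fun x => pdx θ x s - pdx θ x t₀) 2 volume := (h.mθx b hsm).sub (h.mθx b ht₀)
  have h1 := pow_four_le_mul (fun x => (h.dθ hsm.1 x).sub (h.dθ ht₀.1 x)) (mF s hsm) mF' x
  have h2 : ∫ x, (pdx θ x s - pdx θ x t₀) ^ 2 ≤ 4 * B ^ 2 :=
    integral_diff_sq_le b.nonneg (h.mθx b hsm) (h.mθx b ht₀) (b.bθx s hsm) (b.bθx t₀ ht₀)
  have h3 : (0 : ℝ) ≤ ∫ x, (θ x s - θ x t₀) ^ 2 := integral_nonneg fun x => sq_nonneg _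
  have h4 := mul_le_mul_of_nonneg_left h2 h3
  have h5 : ((θ x s - θ x t₀) ^ 2) ^ 2 ≤ (ε ^ 2) ^ 2 := by
    simp only [Pi.sub_apply] at h1
    linarith
  have h6 : (θ x s - θ x t₀) ^ 2 ≤ ε ^ 2 := le_of_sq_le_sq h5 (by positivity)
  exact abs_le_of_sq_le_sq h6 hε.le

lemma exists_lower (h : IsClassicalSolution μ κ R cv v u θ) (b : SliceBounds T B v u θ)
    (hT : 0 < T) (hcv : 0 < cv) (hK : 1 ≤ K) (hv : VolBounded K v) :
    ∃ c > 0, ∀ t ∈ Icc (0 : ℝ) T, ∀ x, c ≤ θ x t := by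
  refine (isCompact_Icc (a := (0 : ℝ)) (b := T)).induction_on
    (p := fun S => ∃ c > 0, ∀ t ∈ S, ∀ x, c ≤ θ x t) ?_ ?_ ?_ ?_
  · exact ⟨1, one_pos, by simp⟩
  · rintro S S' hSS' ⟨c, hc, H⟩
    exact ⟨c, hc, fun t ht => H t (hSS' ht)⟩
  · rintro S S' ⟨c, hc, H⟩ ⟨c', hc', H'⟩
    refine ⟨min c c', lt_min hc hc', ?_⟩
    rintro t (ht | ht) x
    · exact (min_le_left _ _).trans (H t ht x)
    · exact (min_le_right _ _).trans (H' t ht x)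
  · intro t₀ ht₀
    obtain ⟨c, hc, H⟩ := h.exists_lower_slice ht₀.1
    refine ⟨_, h.eventually_abs_sub_le b hT hcv hK hv ht₀ (half_pos hc), c / 2, half_pos hc, ?_⟩
    intro t ht x
    have h1 := (abs_le.1 (ht x)).1
    linarith [H x]

end IsClassicalSolution

/-! ### The relative entropy `y - 1 - log y` -/

/-- The convex function `y - 1 - log y`, vanishing to second order at `y = 1`. -/
noncomputable def ent (y : ℝ) : ℝ := y - 1 - Real.log y

lemma ent_ge {y : ℝ} (hy : 0 < y) : (√y - 1) ^ 2 ≤ ent y := by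
  have h1 := Real.log_le_sub_one_of_pos (Real.sqrt_pos.2 hy)
  rw [Real.log_sqrt hy.le] at h1
  have h2 := Real.sq_sqrt hy.le
  unfold ent
  nlinarith

lemma ent_nonneg {y : ℝ} (hy : 0 < y) : 0 ≤ ent y := (sq_nonneg _).trans (ent_ge hy)

lemma ent_le {c y : ℝ} (hc : 0 < c) (hy : c ≤ y) : ent y ≤ c⁻¹ * (y - 1) ^ 2 := by
  have hy0 := hc.trans_le hy
  have h1 := Real.one_sub_inv_le_log_of_pos hy0
  have h2 : y⁻¹ ≤ c⁻¹ := inv_anti₀ hc hy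
  have h3 : y - 1 - (1 - y⁻¹) = y⁻¹ * (y - 1) ^ 2 := by
    have : y * y⁻¹ = 1 := mul_inv_cancel₀ hy0.ne'
    linear_combination (2 - y) * this
  have h4 := mul_le_mul_of_nonneg_right h2 (sq_nonneg (y - 1))
  unfold ent
  linarith

lemma sub_one_sq_le {y k : ℝ} (hy : 0 < y) (hk : y ≤ k) :
    (y - 1) ^ 2 ≤ (2 * k + 2) * (√y - 1) ^ 2 := by
  have h2 := Real.sq_sqrt hy.le
  have h3 : (y - 1) ^ 2 = (√y + 1) ^ 2 * (√y - 1) ^ 2 := by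
    rw [← mul_pow]; congr 1; nlinarith
  rw [h3]
  refine mul_le_mul_of_nonneg_right ?_ (sq_nonneg _)
  nlinarith [sq_nonneg (√y - 1)]

lemma min_sub_one_sq_le {y : ℝ} (hy : 0 < y) : (min y (3 / 2) - 1) ^ 2 ≤ 5 * ent y := by
  have h0 : 0 < min y (3 / 2) := lt_min hy (by norm_num)
  have h1 := sub_one_sq_le h0 (min_le_right _ _)
  have h2 : (√(min y (3 / 2)) - 1) ^ 2 ≤ (√y - 1) ^ 2 := by
    rcases le_total y (3 / 2) with h | h
    · rw [min_eq_left h]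
    · rw [min_eq_right h]
      have h3 : √(3 / 2) ≤ √y := Real.sqrt_le_sqrt h
      have h4 : 1 ≤ √(3 / 2 : ℝ) := Real.one_le_sqrt.2 (by norm_num)
      exact pow_le_pow_left₀ (by linarith) (by linarith) 2
  have := ent_ge hy
  linarith

lemma continuous_ent_comp {f : ℝ → ℝ} (hf : Continuous f) (h : ∀ x, 0 < f x) :
    Continuous fun x => ent (f x) := by
  unfold ent
  exact (hf.sub continuous_const).sub (hf.log fun x => (h x).ne')

lemma integrable_ent {f : ℝ → ℝ} {c : ℝ} (hf : Continuous f) (hc : 0 < c) (h : ∀ x, c ≤ f x)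
    (mf : MemLp (fun x => f x - 1) 2 volume) : Integrable fun x => ent (f x) := by
  refine (mf.integrable_sq.const_mul c⁻¹).mono'
    (continuous_ent_comp hf fun x => hc.trans_le (h x)).aestronglyMeasurable (ae_of_all _ fun x => ?_)
  rw [Real.norm_of_nonneg (ent_nonneg (hc.trans_le (h x)))]
  exact ent_le hc (h x)

lemma integral_ent_le {f : ℝ → ℝ} {c B : ℝ} (hf : Continuous f) (hc : 0 < c) (h : ∀ x, c ≤ f x)
    (mf : MemLp (fun x => f x - 1) 2 volume) (hB : 0 ≤ B)
    (hfB : eLpNorm (fun x => f x - 1) 2 volume ≤ ENNReal.ofReal B) :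
    ∫ x, ent (f x) ≤ c⁻¹ * B ^ 2 := by
  have h1 := integral_mono (integrable_ent hf hc h mf) (mf.integrable_sq.const_mul c⁻¹)
    fun x => ent_le hc (h x)
  rw [integral_const_mul] at h1
  exact h1.trans (mul_le_mul_of_nonneg_left (integral_sq_le_of_eLpNorm mf hB hfB)
    (inv_nonneg.2 hc.le))

lemma HasDerivAt.ent_comp {f : ℝ → ℝ} {f' x : ℝ} (hf : HasDerivAt f f' x) (h : 0 < f x) :
    HasDerivAt (fun y => ent (f y)) ((1 - (f x)⁻¹) * f') x := by
  unfold ent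
  refine ((hf.sub_const 1).sub (hf.log h.ne')).congr_deriv ?_
  field_simp

lemma abs_one_sub_inv_le {c y : ℝ} (hc : 0 < c) (hy : c ≤ y) : |1 - y⁻¹| ≤ c⁻¹ * |y - 1| := by
  have hy0 := hc.trans_le hy
  have : 1 - y⁻¹ = y⁻¹ * (y - 1) := by field_simp
  rw [this, abs_mul, abs_of_pos (inv_pos.2 hy0)]
  exact mul_le_mul_of_nonneg_right (inv_anti₀ hc hy) (abs_nonneg _)

/-! ### The basic energy estimate -/

lemma integral_exchange {f₁ f₂ g₁ g₂ k : ℝ → ℝ} (i₁ : Integrable f₁) (i₂ : Integrable f₂)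
    (j₁ : Integrable g₁) (j₂ : Integrable g₂) (ik : Integrable k) (h₁ : ∫ x, f₁ x = -∫ x, g₁ x)
    (h₂ : ∫ x, f₂ x = -∫ x, g₂ x) :
    ∫ x, (f₁ x + f₂ x + k x) = ∫ x, (k x - g₁ x - g₂ x) := by
  have e₁ : Integrable fun x => f₁ x + f₂ x := i₁.add i₂
  have e₂ : Integrable fun x => k x - g₁ x := ik.sub j₁
  rw [integral_add e₁ ik, integral_add i₁ i₂, integral_sub e₂ j₂, integral_sub ik j₁, h₁, h₂]
  ring

/-- The density of the basic energy. -/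
noncomputable def energy (R cv : ℝ) (v u θ : ℝ → ℝ → ℝ) (x t : ℝ) : ℝ :=
  u x t ^ 2 / 2 + R * ent (v x t) + cv * ent (θ x t)

namespace IsClassicalSolution

variable {μ κ R cv : ℝ} {v u θ : ℝ → ℝ → ℝ} {T B K : ℝ}

lemma jS (h : IsClassicalSolution μ κ R cv v u θ) :
    JointMeas fun x t => μ * (pdx u x t / v x t) - R * (θ x t / v x t - 1) :=
  ((h.jux.div h.jv).const_mul μ).sub (((h.jθ.div h.jv).sub_const 1).const_mul R)

lemma sS (h : IsClassicalSolution μ κ R cv v u θ) (b : SliceBounds T B v u θ)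
    (hK : 1 ≤ K) (hv : VolBounded K v) :
    SqInt T fun x t => μ * (pdx u x t / v x t) - R * (θ x t / v x t - 1) := by
  have h1 : SqInt T fun x t => θ x t / v x t - 1 := by
    refine (h.s_div hK hv ((h.jθ.sub_const 1).sub (h.jv.sub_const 1))
      ((h.sθ b).sub (h.sv b))).congr fun x t ht => ?_
    have := (h.v_pos x t ht.1).ne'
    field_simp
    ring
  exact ((h.s_div hK hv h.jux (h.sux b)).const_mul μ).sub (h1.const_mul R)

/-- Joint measurability of the `x`-derivative of the heat flux `κ θ_x / v`, in the form given by the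
energy equation. -/
lemma jG (h : IsClassicalSolution μ κ R cv v u θ) (hcv : 0 < cv) : JointMeas fun x t =>
    cv * pdt θ x t + (R * θ x t / v x t) * pdx u x t - μ * (pdx u x t) ^ 2 / v x t :=
  (((h.jθt hcv).const_mul cv).add (((h.jθ.const_mul R).div h.jv).mul h.jux)).sub
    (((h.jux.pow 2).const_mul μ).div h.jv)

lemma sG (h : IsClassicalSolution μ κ R cv v u θ) (b : SliceBounds T B v u θ) (hT : 0 < T)
    (hcv : 0 < cv) (hK : 1 ≤ K) (hv : VolBounded K v) : SqInt T fun x t =>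
    cv * pdt θ x t + (R * θ x t / v x t) * pdx u x t - μ * (pdx u x t) ^ 2 / v x t := by
  refine ((((h.sθt b hT hcv hK hv).const_mul cv).add
    ((h.s_div hK hv (h.jθ.mul h.jux) (h.s_θmul b h.jux (h.sux b))).const_mul R)).sub
    ((h.s_div hK hv (h.jux.mul h.jux) (h.sux_mul b hT h.jux b.bux)).const_mul μ)).congr
    fun x t ht => ?_
  ring

lemma sq_inv (h : IsClassicalSolution μ κ R cv v u θ) (b : SliceBounds T B v u θ) {c : ℝ}
    (hc : 0 < c) (hθ : ∀ t ∈ Icc (0 : ℝ) T, ∀ x, c ≤ θ x t) :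
    SqInt T fun x t => 1 - (θ x t)⁻¹ :=
  (h.sθ b).of_le (c := c⁻¹) (Measurable.const_sub (Measurable.inv h.jθ) 1)
    fun x t ht => abs_one_sub_inv_le hc (hθ t ht x)

lemma sv_inv (h : IsClassicalSolution μ κ R cv v u θ) (b : SliceBounds T B v u θ)
    (hK : 1 ≤ K) (hv : VolBounded K v) : SqInt T fun x t => 1 - (v x t)⁻¹ :=
  (h.sv b).of_le (c := K⁻¹⁻¹) (Measurable.const_sub (Measurable.inv h.jv) 1)
    fun x t ht => abs_one_sub_inv_le (inv_pos.2 (by linarith)) (hv x t ht.1).1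

lemma sqx (h : IsClassicalSolution μ κ R cv v u θ) (b : SliceBounds T B v u θ) {c : ℝ}
    (hc : 0 < c) (hθ : ∀ t ∈ Icc (0 : ℝ) T, ∀ x, c ≤ θ x t) :
    SqInt T fun x t => pdx θ x t / θ x t ^ 2 := by
  refine (h.sθx b).of_le (c := (c ^ 2)⁻¹) (h.jθx.div (h.jθ.pow 2)) fun x t ht => ?_
  have h1 : c ^ 2 ≤ θ x t ^ 2 := pow_le_pow_left₀ hc.le (hθ t ht x) 2
  rw [abs_div, abs_of_nonneg (sq_nonneg (θ x t)), div_eq_inv_mul]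
  exact mul_le_mul_of_nonneg_right (inv_anti₀ (by positivity) h1) (abs_nonneg _)

/-- For almost every time the time derivative of the energy integrates to
`-∫ (μ u_x² / (v θ) + κ θ_x² / (v θ²)) ≤ 0`. -/
lemma energy_rate_nonpos (h : IsClassicalSolution μ κ R cv v u θ) (b : SliceBounds T B v u θ)
    (hT : 0 < T) (hμ : 0 < μ) (hκ : 0 < κ) (hcv : 0 < cv) (hK : 1 ≤ K) (hv : VolBounded K v) {c : ℝ}
    (hc : 0 < c) (hθ : ∀ t ∈ Icc (0 : ℝ) T, ∀ x, c ≤ θ x t) :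
    ∀ᵐ t ∂volume.restrict (Icc 0 T), ∫ x, (u x t * pdt u x t + R * ((1 - (v x t)⁻¹) * pdx u x t)
      + cv * ((1 - (θ x t)⁻¹) * pdt θ x t)) ≤ 0 := by
  have jq : JointMeas fun x t => 1 - (θ x t)⁻¹ := Measurable.const_sub (Measurable.inv h.jθ) 1
  have ja : JointMeas fun x t => 1 - (v x t)⁻¹ := Measurable.const_sub (Measurable.inv h.jv) 1
  filter_upwards [ae_restrict_mem measurableSet_Icc, (h.sut b hT hK hv).slice h.jut,
    (h.sθt b hT hcv hK hv).slice (h.jθt hcv), (h.sS b hK hv).slice h.jS,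
    (h.sG b hT hcv hK hv).slice (h.jG hcv), (h.sq_inv b hc hθ).slice jq,
    (h.sv_inv b hK hv).slice ja, (h.sqx b hc hθ).slice (h.jθx.div (h.jθ.pow 2)),
    ((h.s_div hK hv h.jθx (h.sθx b)).const_mul κ).slice ((h.jθx.div h.jv).const_mul κ)]
    with t ht mUt mθt mS mG mq ma mqx mfl
  have hdq : ∀ x, HasDerivAt (fun y => 1 - (θ y t)⁻¹) (pdx θ x t / θ x t ^ 2) x := by
    intro x
    have := ((h.dθ ht.1 x).inv (h.θ_pos x t ht.1).ne').const_sub 1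
    refine this.congr_deriv ?_
    ring
  have p1 := integral_by_parts (h.du ht.1) (h.dS ht.1) (h.mu b ht) (h.mux b ht) mS mUt
  have p2 := integral_by_parts hdq (h.dq ht.1) mq mqx mfl mG
  have i1 := (h.mu b ht).integrable_mul mUt
  have i2 := mq.integrable_mul mG
  have i3 := (h.mux b ht).integrable_mul mS
  have i4 := mqx.integrable_mul mfl
  have i5 := (((ma.integrable_mul (h.mux b ht)).const_mul R).add
    ((mq.integrable_mul mθt).const_mul cv)).sub i2
  simp only [Pi.mul_def, Pi.add_def, Pi.sub_def] at i1 i2 i3 i4 i5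
  have e := integral_exchange i1 i2 i3 i4 i5 p1 p2
  refine le_of_eq_of_le ((integral_congr_ae (ae_of_all _ fun x => ?_)).trans e) ?_
  · ring
  refine integral_nonpos fun x => ?_
  have h0 := h.v_pos x t ht.1
  have h1 := h.θ_pos x t ht.1
  have : 0 ≤ μ * pdx u x t ^ 2 / (v x t * θ x t) + κ * pdx θ x t ^ 2 / (v x t * θ x t ^ 2) := by
    positivity
  refine le_of_eq_of_le ?_ (neg_nonpos.2 this)
  simp only
  field_simp
  ring

lemma integrable_energy (h : IsClassicalSolution μ κ R cv v u θ) (b : SliceBounds T B v u θ)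
    (hK : 1 ≤ K) (hv : VolBounded K v) {c : ℝ}
    (hc : 0 < c) (hθ : ∀ t ∈ Icc (0 : ℝ) T, ∀ x, c ≤ θ x t) {t : ℝ} (ht : t ∈ Icc 0 T) :
    Integrable fun x => energy R cv v u θ x t :=
  (((h.mu b ht).integrable_sq.div_const 2).add
    ((integrable_ent (h.cv' ht.1) (inv_pos.2 (by linarith)) (fun x => (hv x t ht.1).1)
      (h.mv b ht)).const_mul R)).add
    ((integrable_ent (h.cθ ht.1) hc (hθ t ht) (h.mθ b ht)).const_mul cv)

lemma energy_le (h : IsClassicalSolution μ κ R cv v u θ) (b : SliceBounds T B v u θ)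
    (hT : 0 < T) (hμ : 0 < μ) (hκ : 0 < κ) (hcv : 0 < cv) (hK : 1 ≤ K) (hv : VolBounded K v) {c : ℝ}
    (hc : 0 < c) (hθ : ∀ t ∈ Icc (0 : ℝ) T, ∀ x, c ≤ θ x t) {t : ℝ} (ht : t ∈ Icc 0 T) :
    ∫ x, energy R cv v u θ x t ≤ ∫ x, energy R cv v u θ x 0 := by
  have h00 : (0 : ℝ) ∈ Icc 0 T := ⟨le_rfl, hT.le⟩
  have hi := (((h.su b).integrable_mul (h.sut b hT hK hv)).add
    (((h.sv_inv b hK hv).integrable_mul (h.sux b)).const_mul R)).add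
    (((h.sq_inv b hc hθ).integrable_mul (h.sθt b hT hcv hK hv)).const_mul cv)
  have key := integral_time_increment (F := energy R cv v u θ)
    (F' := fun x t => u x t * pdt u x t + R * ((1 - (v x t)⁻¹) * pdx u x t)
      + cv * ((1 - (θ x t)⁻¹) * pdt θ x t)) h00 ht (fun x s hs => by
      have d1 : HasDerivAt (u x) (pdt u x s) s := (h.smooth_t_u x s hs.1).hasDerivAt
      have d2 : HasDerivAt (v x) (pdx u x s) s := by
        rw [← h.eq_mass x s hs.1]; exact (h.smooth_t_v x s hs.1).hasDerivAt
      have d3 : HasDerivAt (θ x) (pdt θ x s) s := (h.smooth_t_θ x s hs.1).hasDerivAt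
      refine ((((d1.pow 2).div_const 2).add ((d2.ent_comp (h.v_pos x s hs.1)).const_mul R)).add
        ((d3.ent_comp (h.θ_pos x s hs.1)).const_mul cv)).congr_deriv ?_
      simp
      ring) hi
    (h.integrable_energy b hK hv hc hθ h00) (h.integrable_energy b hK hv hc hθ ht)
  rw [intervalIntegral.integral_of_le ht.1] at key
  have : ∫ s in Ioc 0 t, ∫ x, (u x s * pdt u x s + R * ((1 - (v x s)⁻¹) * pdx u x s)
      + cv * ((1 - (θ x s)⁻¹) * pdt θ x s)) ≤ 0 :=
    integral_nonpos_of_ae (ae_mono (Measure.restrict_mono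
      (Ioc_subset_Icc_self.trans (Icc_subset_Icc_right ht.2)) le_rfl)
      (h.energy_rate_nonpos b hT hμ hκ hcv hK hv hc hθ))
  linarith

/-- The bound of the initial energy in terms of the data. -/
lemma energy_zero_le (h : IsClassicalSolution μ κ R cv v u θ) {M m : ℝ} (hR : 0 < R) (hcv : 0 < cv)
    (hM : 0 < M) (hm : 0 < m) (hI : InitBounded M m v u θ) :
    ∫ x, energy R cv v u θ x 0 ≤ M ^ 2 / 2 + R * (m⁻¹ * M ^ 2) + cv * (m⁻¹ * M ^ 2) := by
  have b : SliceBounds 0 M v u θ := SliceBounds.of_H1 hM.le fun t ht => by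
    have : t = 0 := le_antisymm ht.2 ht.1
    rw [this]; exact hI.1
  have ht : (0 : ℝ) ∈ Icc (0 : ℝ) 0 := ⟨le_rfl, le_rfl⟩
  have i1 := (h.mu b ht).integrable_sq.div_const 2
  have i2 := (integrable_ent (h.cv' le_rfl) hm hI.2.1 (h.mv b ht)).const_mul R
  have i3 := (integrable_ent (h.cθ le_rfl) hm hI.2.2 (h.mθ b ht)).const_mul cv
  have i12 : Integrable fun x => u x 0 ^ 2 / 2 + R * ent (v x 0) := i1.add i2
  unfold energy
  rw [integral_add i12 i3, integral_add i1 i2, integral_div, integral_const_mul,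
    integral_const_mul]
  have h1 := integral_sq_le_of_eLpNorm (h.mu b ht) hM.le (b.bu 0 ht)
  have h2 := integral_ent_le (h.cv' le_rfl) hm hI.2.1 (h.mv b ht) hM.le (b.bv 0 ht)
  have h3 := integral_ent_le (h.cθ le_rfl) hm hI.2.2 (h.mθ b ht) hM.le (b.bθ 0 ht)
  have h4 := mul_le_mul_of_nonneg_left h2 hR.le
  have h5 := mul_le_mul_of_nonneg_left h3 hcv.le
  linarith

lemma sq_u_le_energy (h : IsClassicalSolution μ κ R cv v u θ) (hR : 0 < R) (hcv : 0 < cv) {t : ℝ}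
    (ht : 0 ≤ t) (x : ℝ) : u x t ^ 2 ≤ 2 * energy R cv v u θ x t := by
  have h1 := mul_nonneg hR.le (ent_nonneg (h.v_pos x t ht))
  have h2 := mul_nonneg hcv.le (ent_nonneg (h.θ_pos x t ht))
  unfold energy
  linarith

/-- The truncated difference `min θ (3/2) - v` is controlled by the energy. -/
lemma sq_trunc_le_energy (h : IsClassicalSolution μ κ R cv v u θ) (hR : 0 < R) (hcv : 0 < cv)
    (hK : 1 ≤ K) (hv : VolBounded K v) {t : ℝ} (ht : 0 ≤ t) (x : ℝ) :
    (min (θ x t) (3 / 2) - v x t) ^ 2 ≤ (10 / cv + (4 * K + 4) / R) * energy R cv v u θ x t := by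
  have h0 := h.v_pos x t ht
  have h1 := mul_nonneg hR.le (ent_nonneg h0)
  have h2 := mul_nonneg hcv.le (ent_nonneg (h.θ_pos x t ht))
  have h3 := min_sub_one_sq_le (h.θ_pos x t ht)
  have h4 := (sub_one_sq_le h0 (hv x t ht).2).trans
    (mul_le_mul_of_nonneg_left (ent_ge h0) (by linarith))
  have e1 : cv * ent (θ x t) ≤ energy R cv v u θ x t := by
    unfold energy; nlinarith [sq_nonneg (u x t)]
  have e2 : R * ent (v x t) ≤ energy R cv v u θ x t := by
    unfold energy; nlinarith [sq_nonneg (u x t)]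
  have e3 : 10 * ent (θ x t) ≤ 10 / cv * energy R cv v u θ x t := by
    rw [div_mul_eq_mul_div, le_div_iff₀ hcv]; linarith
  have e4 : (4 * K + 4) * ent (v x t) ≤ (4 * K + 4) / R * energy R cv v u θ x t := by
    rw [div_mul_eq_mul_div, le_div_iff₀ hR]
    have := mul_le_mul_of_nonneg_left e2 (show 0 ≤ 4 * K + 4 by linarith)
    linarith
  nlinarith [sq_nonneg (min (θ x t) (3 / 2) - 1 + (v x t - 1))]

end IsClassicalSolution

/-! ### The fourth-power estimate -/

lemma ofReal_integral_le {α : Type*} [MeasurableSpace α] {ν : Measure α} {f : α → ℝ}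
    (hf : Integrable f ν) : ENNReal.ofReal (∫ x, f x ∂ν) ≤ ∫⁻ x, ENNReal.ofReal (f x) ∂ν := by
  rw [integral_eq_lintegral_pos_part_sub_lintegral_neg_part hf]
  refine (ENNReal.ofReal_le_ofReal (sub_le_self _ ENNReal.toReal_nonneg)).trans ?_
  exact ENNReal.ofReal_toReal_le

/-- The pointwise inequality behind the fourth-power estimate. Here `p = u`, `d = u_x`, `s = v`,
`y = θ`, `A` bounds `(θ - 3/2)₊²` and `Q` bounds `u⁴`. -/
lemma fourth_power_pointwise {μ R K p d s y A Q e W : ℝ} (hμ : 0 < μ) (hR : 0 < R) (hK : 1 ≤ K)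
    (hs : 0 < s) (hs1 : K⁻¹ ≤ s) (hs2 : s ≤ K) (hA : max (y - 3 / 2) 0 ^ 2 ≤ A)
    (hQ : (p ^ 2) ^ 2 ≤ Q) (he : p ^ 2 ≤ 2 * e) (hW : (min y (3 / 2) - s) ^ 2 ≤ W * e) :
    -(12 * p ^ 2 * d * (μ * (d / s) - R * (y / s - 1))) + 6 * μ / K * (p ^ 2 * d ^ 2)
      ≤ (12 * R ^ 2 * K ^ 3 / μ * A + 6 * R * K * Q * W) * e + 6 * R * K * d ^ 2 := by
  have hK0 : 0 < K := by linarith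
  set z := max (y - 3 / 2) 0 with hz
  set w := min y (3 / 2) - s with hw
  have hyz : y - s = z + w := by
    rw [hz, hw]
    rcases le_total y (3 / 2) with h | h
    · rw [min_eq_left h, max_eq_right (by linarith)]; ring
    · rw [min_eq_right h, max_eq_left (by linarith)]; ring
  have hz0 : 0 ≤ z := le_max_right _ _
  set i := s⁻¹ with hi
  have hi0 : 0 < i := inv_pos.2 hs
  have hi1 : i ≤ K := inv_le_of_inv_le₀ hK0 hs1
  have hi2 : K⁻¹ ≤ i := inv_anti₀ hs hs2
  have e1 : -(12 * p ^ 2 * d * (μ * (d / s) - R * (y / s - 1)))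
      = -(12 * μ * i * (p ^ 2 * d ^ 2)) + 12 * R * i * p ^ 2 * d * z
        + 12 * R * i * p ^ 2 * d * w := by
    have : y / s - 1 = i * (z + w) := by
      rw [← hyz, hi]; field_simp
    rw [this, div_eq_mul_inv, ← hi]; ring
  have t1 : 12 * μ / K * (p ^ 2 * d ^ 2) ≤ 12 * μ * i * (p ^ 2 * d ^ 2) := by
    rw [div_eq_mul_inv]
    gcongr
  have hi3 : i ^ 2 ≤ K ^ 2 := pow_le_pow_left₀ hi0.le hi1 2
  -- The Young inequality for the part of the pressure above the truncation level.
  have t2 : 12 * R * i * p ^ 2 * d * z ≤ 6 * μ / K * (p ^ 2 * d ^ 2)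
      + 12 * R ^ 2 * K ^ 3 / μ * A * e := by
    have a1 : 12 * R * i * p ^ 2 * d * z ≤ 6 * μ / K * (p ^ 2 * d ^ 2)
        + 6 * R ^ 2 * K / μ * (p ^ 2 * z ^ 2) * i ^ 2 := by
      have : 6 * μ / K * (p ^ 2 * d ^ 2) + 6 * R ^ 2 * K / μ * (p ^ 2 * z ^ 2) * i ^ 2
          - 12 * R * i * p ^ 2 * d * z = 6 * K / μ * p ^ 2 * (μ / K * d - R * i * z) ^ 2 := by
        field_simp
        ring
      have h2 : 0 ≤ 6 * K / μ * p ^ 2 * (μ / K * d - R * i * z) ^ 2 := by positivity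
      linarith
    have a2 : 6 * R ^ 2 * K / μ * (p ^ 2 * z ^ 2) * i ^ 2
        ≤ 6 * R ^ 2 * K / μ * (2 * e * A) * K ^ 2 := by
      have he0 : 0 ≤ e := by nlinarith [sq_nonneg p]
      have hA0 : 0 ≤ A := hA.trans' (sq_nonneg z)
      gcongr
    have a3 : 6 * R ^ 2 * K / μ * (2 * e * A) * K ^ 2 = 12 * R ^ 2 * K ^ 3 / μ * A * e := by ring
    linarith
  have t3 : 12 * R * i * p ^ 2 * d * w ≤ 6 * R * K * Q * W * e + 6 * R * K * d ^ 2 := by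
    have a1 : 12 * R * i * p ^ 2 * d * w ≤ 6 * R * i * ((p ^ 2) ^ 2 * w ^ 2 + d ^ 2) := by
      have : 0 ≤ 6 * R * i * (p ^ 2 * w - d) ^ 2 := by positivity
      linarith
    have a2 : 6 * R * i * ((p ^ 2) ^ 2 * w ^ 2 + d ^ 2) ≤ 6 * R * K * (Q * (W * e) + d ^ 2) := by
      have := hQ.trans' (sq_nonneg _)
      gcongr
    linarith
  rw [e1]
  have : 12 * μ / K * (p ^ 2 * d ^ 2) = 2 * (6 * μ / K * (p ^ 2 * d ^ 2)) := by ring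
  linarith

namespace IsClassicalSolution

variable {μ κ R cv : ℝ} {v u θ : ℝ → ℝ → ℝ} {T B K : ℝ}

lemma mu_sq_mul (h : IsClassicalSolution μ κ R cv v u θ) (b : SliceBounds T B v u θ) {t : ℝ}
    (ht : t ∈ Icc 0 T) {f : ℝ → ℝ} (hf : MemLp f 2 volume) (c : ℝ) :
    MemLp (fun x => c * u x t ^ 2 * f x) 2 volume := by
  refine MemLp.of_le_mul (c := |c| * (2 * B) ^ 2) hf
    (((continuous_const.mul ((h.cu ht.1).pow 2)).aestronglyMeasurable).mul hf.1)
    (ae_of_all _ fun x => ?_)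
  rw [Real.norm_eq_abs, Real.norm_eq_abs, abs_mul, abs_mul, abs_pow]
  have := h.abs_u_le b ht x
  gcongr

lemma muux (h : IsClassicalSolution μ κ R cv v u θ) (b : SliceBounds T B v u θ) {t : ℝ}
    (ht : t ∈ Icc 0 T) : MemLp (fun x => u x t * pdx u x t) 2 volume := by
  refine MemLp.of_le_mul (c := 2 * B) (h.mux b ht)
    ((h.cu ht.1).mul (h.dux ht.1).continuous).aestronglyMeasurable (ae_of_all _ fun x => ?_)
  rw [Real.norm_eq_abs, Real.norm_eq_abs, abs_mul]
  have := h.abs_u_le b ht x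
  gcongr

lemma suux (h : IsClassicalSolution μ κ R cv v u θ) (b : SliceBounds T B v u θ) :
    SqInt T fun x t => u x t * pdx u x t := by
  refine (h.sux b).of_le (c := 2 * B) (h.ju.mul h.jux) fun x t ht => ?_
  rw [abs_mul]
  have := h.abs_u_le b ht x
  gcongr

lemma integrable_u2ux2 (h : IsClassicalSolution μ κ R cv v u θ) (b : SliceBounds T B v u θ) {t : ℝ}
    (ht : t ∈ Icc 0 T) : Integrable fun x => u x t ^ 2 * pdx u x t ^ 2 :=
  (h.muux b ht).integrable_sq.congr (ae_of_all _ fun x => by simp only; ring)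

lemma integrable_u4 (h : IsClassicalSolution μ κ R cv v u θ) (b : SliceBounds T B v u θ) {t : ℝ}
    (ht : t ∈ Icc 0 T) : Integrable fun x => u x t ^ 4 :=
  ((h.mu b ht).integrable_mul (h.mu_sq_mul b ht (h.mu b ht) 1)).congr
    (ae_of_all _ fun x => by simp only [Pi.mul_apply]; ring)

lemma integrable_u3ut (h : IsClassicalSolution μ κ R cv v u θ) (b : SliceBounds T B v u θ)
    (hT : 0 < T) (hK : 1 ≤ K) (hv : VolBounded K v) :
    Integrable (fun p : ℝ × ℝ => 4 * u p.1 p.2 ^ 2 * u p.1 p.2 * pdt u p.1 p.2) (slab T) := by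
  have : SqInt T fun x t => 4 * u x t ^ 2 * u x t := by
    refine (h.su b).of_le (c := 4 * (2 * B) ^ 2) (((h.ju.pow 2).const_mul 4).mul h.ju)
      fun x t ht => ?_
    rw [abs_mul, abs_mul, abs_pow, abs_of_pos (show (0 : ℝ) < 4 by norm_num)]
    have := h.abs_u_le b ht x
    gcongr
  exact this.integrable_mul (h.sut b hT hK hv)

/-- Differential form of the estimate: `E` is a bound for the energy and `A` for
`(θ - 3/2)₊²`. -/
lemma fourth_power_rate (h : IsClassicalSolution μ κ R cv v u θ) (b : SliceBounds T B v u θ)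
    (hT : 0 < T) (hμ : 0 < μ) (hR : 0 < R) (hcv : 0 < cv) (hK : 1 ≤ K)
    (hv : VolBounded K v) {c E : ℝ} (hc : 0 < c) (hθ : ∀ t ∈ Icc (0 : ℝ) T, ∀ x, c ≤ θ x t)
    (hE : ∀ t ∈ Icc (0 : ℝ) T, ∫ x, energy R cv v u θ x t ≤ E) {A : ℝ → ℝ}
    (hA : ∀ t ∈ Icc (0 : ℝ) T, ∀ x, max (θ x t - 3 / 2) 0 ^ 2 ≤ A t) :
    ∀ᵐ t ∂volume.restrict (Icc 0 T), (∫ x, 4 * u x t ^ 2 * u x t * pdt u x t)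
      + 6 * μ / K * (∫ x, u x t ^ 2 * pdx u x t ^ 2)
      ≤ 12 * R ^ 2 * K ^ 3 / μ * E * A t
        + 6 * R * K * (8 * E ^ 2 * (10 / cv + (4 * K + 4) / R) + 1) * ∫ x, pdx u x t ^ 2 := by
  filter_upwards [ae_restrict_mem measurableSet_Icc, (h.sut b hT hK hv).slice h.jut,
    (h.sS b hK hv).slice h.jS] with t ht mUt mS
  have hK0 : 0 < K := by linarith
  set W := 10 / cv + (4 * K + 4) / R with hW
  have hW0 : 0 < W := by positivity
  have ie := h.integrable_energy b hK hv hc hθ ht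
  have e0 : ∀ x, 0 ≤ energy R cv v u θ x t := fun x => by
    have := h.sq_u_le_energy hR hcv ht.1 x
    nlinarith [sq_nonneg (u x t)]
  have hE0 : 0 ≤ E := (integral_nonneg e0).trans (hE t ht)
  have hA0 : 0 ≤ A t := (sq_nonneg _).trans (hA t ht 0)
  set N := ∫ x, pdx u x t ^ 2 with hN
  have hN0 : 0 ≤ N := integral_nonneg fun x => sq_nonneg _
  have hu2 : ∫ x, u x t ^ 2 ≤ 2 * E := by
    have := integral_mono (h.mu b ht).integrable_sq (ie.const_mul 2)
      fun x => h.sq_u_le_energy hR hcv ht.1 x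
    rw [integral_const_mul] at this
    linarith [hE t ht]
  have hQ : ∀ x, (u x t ^ 2) ^ 2 ≤ 8 * E * N := fun x => by
    have h1 := pow_four_le_mul (h.du ht.1) (h.mu b ht) (h.mux b ht) x
    have h2 := mul_le_mul_of_nonneg_right hu2 hN0
    linarith
  have p := integral_by_parts (f := fun x => 4 * u x t ^ 2 * u x t)
    (f' := fun x => 12 * u x t ^ 2 * pdx u x t) (fun x => by
      refine ((((h.du ht.1 x).pow 2).const_mul 4).mul (h.du ht.1 x)).congr_deriv ?_
      simp
      ring) (h.dS ht.1) (h.mu_sq_mul b ht (h.mu b ht) 4) (h.mu_sq_mul b ht (h.mux b ht) 12) mS mUt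
  have i1 := ((h.mu_sq_mul b ht (h.mux b ht) 12).integrable_mul mS).neg
  have i2 := (h.integrable_u2ux2 b ht).const_mul (6 * μ / K)
  have i3 := ie.const_mul (12 * R ^ 2 * K ^ 3 / μ * A t + 6 * R * K * (8 * E * N) * W)
  have i4 := (h.mux b ht).integrable_sq.const_mul (6 * R * K)
  have key := integral_mono (i1.add i2) (i3.add i4) fun x =>
    fourth_power_pointwise hμ hR hK (h.v_pos x t ht.1) (hv x t ht.1).1 (hv x t ht.1).2
      (hA t ht x) (hQ x) (h.sq_u_le_energy hR hcv ht.1 x)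
      (h.sq_trunc_le_energy hR hcv hK hv ht.1 x) (d := pdx u x t)
  rw [integral_add' i1 i2, integral_add' i3 i4, integral_const_mul, integral_const_mul,
    integral_const_mul, ← hN, integral_neg'] at key
  simp only [Pi.mul_apply] at key
  rw [p]
  have h5 := mul_le_mul_of_nonneg_left (hE t ht) (show
    0 ≤ 12 * R ^ 2 * K ^ 3 / μ * A t + 6 * R * K * (8 * E * N) * W by positivity)
  refine key.trans ((add_le_add_left h5 _).trans (le_of_eq ?_))
  ring

end IsClassicalSolution

namespace IsClassicalSolution

variable {μ κ R cv : ℝ} {v u θ : ℝ → ℝ → ℝ} {T B K : ℝ}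

/-- Integrated form of the estimate on `[0, τ]`. -/
lemma fourth_power_integrated (h : IsClassicalSolution μ κ R cv v u θ) (b : SliceBounds T B v u θ)
    (hT : 0 < T) (hμ : 0 < μ) (hR : 0 < R) (hcv : 0 < cv) (hK : 1 ≤ K)
    (hv : VolBounded K v) {c E c₀ : ℝ} (hc : 0 < c) (hθ : ∀ t ∈ Icc (0 : ℝ) T, ∀ x, c ≤ θ x t)
    (hE0 : 0 ≤ E) (hE : ∀ t ∈ Icc (0 : ℝ) T, ∫ x, energy R cv v u θ x t ≤ E)
    (hc₀ : ∫ x, u x 0 ^ 4 ≤ c₀) {τ : ℝ} (hτ : τ ∈ Icc 0 T) :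
    ENNReal.ofReal ((∫ x, u x τ ^ 4) + 6 * μ / K * ∫ t in Ioc 0 τ, ∫ x, u x t ^ 2 * pdx u x t ^ 2)
      ≤ ENNReal.ofReal c₀
        + ENNReal.ofReal (6 * R * K * (8 * E ^ 2 * (10 / cv + (4 * K + 4) / R) + 1))
          * (∫⁻ t in Icc (0 : ℝ) T, ∫⁻ x : ℝ, ENNReal.ofReal (pdx u x t ^ 2))
        + ENNReal.ofReal (12 * R ^ 2 * K ^ 3 / μ * E) * (∫⁻ t in Icc (0 : ℝ) T,
            ⨆ x : ℝ, ENNReal.ofReal (max (θ x t - 3 / 2) 0 ^ 2)) := by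
  have hK0 : 0 < K := by linarith
  have h00 : (0 : ℝ) ∈ Icc 0 T := ⟨le_rfl, hT.le⟩
  have hsub : Ioc 0 τ ⊆ Icc 0 T := Ioc_subset_Icc_self.trans (Icc_subset_Icc_right hτ.2)
  set A : ℝ → ENNReal := fun t => ⨆ x : ℝ, ENNReal.ofReal (max (θ x t - 3 / 2) 0 ^ 2) with hAdef
  have hAtop : ∀ t ∈ Icc (0 : ℝ) T, A t ≠ ⊤ := by
    intro t ht
    refine ((iSup_le fun x => ENNReal.ofReal_le_ofReal (?_ : _ ≤ (1 + 2 * B) ^ 2)).trans_lt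
      ENNReal.ofReal_lt_top).ne
    have h1 := (abs_le.1 (h.abs_θ_le b ht x)).2
    have h2 := b.nonneg
    exact pow_le_pow_left₀ (le_max_right _ _) (max_le (by linarith) (by linarith)) 2
  have hA : ∀ t ∈ Icc (0 : ℝ) T, ∀ x, max (θ x t - 3 / 2) 0 ^ 2 ≤ (A t).toReal := by
    intro t ht x
    rw [← ENNReal.ofReal_le_iff_le_toReal (hAtop t ht)]
    exact le_iSup (fun x : ℝ => ENNReal.ofReal (max (θ x t - 3 / 2) 0 ^ 2)) x
  set C₁ := 12 * R ^ 2 * K ^ 3 / μ * E with hC₁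
  set C₂ := 6 * R * K * (8 * E ^ 2 * (10 / cv + (4 * K + 4) / R) + 1) with hC₂
  have hC₁0 : 0 ≤ C₁ := by positivity
  have hC₂0 : 0 ≤ C₂ := by positivity
  have rate := h.fourth_power_rate b hT hμ hR hcv hK hv hc hθ hE hA
  rw [← hC₁, ← hC₂] at rate
  have iG := h.integrable_u3ut b hT hK hv
  have gG : IntegrableOn (fun t => ∫ x, 4 * u x t ^ 2 * u x t * pdt u x t) (Ioc 0 τ) :=
    IntegrableOn.mono_set (s := Ioc 0 τ) (t := Icc 0 T) iG.integral_prod_right hsub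
  have gD : IntegrableOn (fun t => ∫ x, u x t ^ 2 * pdx u x t ^ 2) (Ioc 0 τ) := by
    have : Integrable (fun p : ℝ × ℝ => u p.1 p.2 ^ 2 * pdx u p.1 p.2 ^ 2) (slab T) :=
      (MemLp.integrable_sq (h.suux b)).congr (ae_of_all _ fun p => by simp only; ring)
    exact IntegrableOn.mono_set (s := Ioc 0 τ) (t := Icc 0 T) this.integral_prod_right hsub
  have inc := integral_time_increment (F := fun x t => u x t ^ 4)
    (F' := fun x t => 4 * u x t ^ 2 * u x t * pdt u x t) h00 hτ (fun x t ht => by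
      have d1 : HasDerivAt (u x) (pdt u x t) t := (h.smooth_t_u x t ht.1).hasDerivAt
      refine (d1.pow 4).congr_deriv ?_
      push_cast
      ring) iG (h.integrable_u4 b h00) (h.integrable_u4 b hτ)
  rw [intervalIntegral.integral_of_le hτ.1] at inc
  have e : (∫ x, u x τ ^ 4) + 6 * μ / K * ∫ t in Ioc 0 τ, ∫ x, u x t ^ 2 * pdx u x t ^ 2
      = (∫ x, u x 0 ^ 4) + ∫ t in Ioc 0 τ, ((∫ x, 4 * u x t ^ 2 * u x t * pdt u x t)
        + 6 * μ / K * ∫ x, u x t ^ 2 * pdx u x t ^ 2) := by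
    rw [integral_add gG (gD.const_mul _), integral_const_mul]
    linarith
  rw [e, add_assoc]
  refine ENNReal.ofReal_add_le.trans (add_le_add (ENNReal.ofReal_le_ofReal hc₀) ?_)
  refine (ofReal_integral_le (gG.add (gD.const_mul _))).trans ?_
  refine (lintegral_mono_set hsub).trans ?_
  have meas : AEMeasurable (fun t => ∫⁻ x, ENNReal.ofReal (pdx u x t ^ 2))
      (volume.restrict (Icc 0 T)) := by
    refine (h.jux.aemeasurable_lintegral T).congr (ae_of_all _ fun t => lintegral_congr fun x => ?_)
    rw [← enorm_pow, Real.enorm_eq_ofReal (sq_nonneg _)]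
  rw [← lintegral_const_mul' _ _ ENNReal.ofReal_ne_top,
    ← lintegral_const_mul' _ _ ENNReal.ofReal_ne_top, ← lintegral_add_left' (meas.const_mul _)]
  refine lintegral_mono_ae ?_
  filter_upwards [rate, ae_restrict_mem measurableSet_Icc] with t hr ht
  refine (ENNReal.ofReal_le_ofReal hr).trans ?_
  have hN0 : 0 ≤ ∫ x, pdx u x t ^ 2 := integral_nonneg fun x => sq_nonneg _
  rw [add_comm (C₁ * _), ENNReal.ofReal_add (by positivity)
    (mul_nonneg hC₁0 ENNReal.toReal_nonneg), ENNReal.ofReal_mul hC₂0, ENNReal.ofReal_mul hC₁0,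
    ENNReal.ofReal_toReal (hAtop t ht), ofReal_integral_eq_lintegral_ofReal
      (h.mux b ht).integrable_sq (ae_of_all _ fun x => sq_nonneg _)]

lemma integral_u4_zero_le (h : IsClassicalSolution μ κ R cv v u θ) {M m : ℝ}
    (hM : 0 < M) (hI : InitBounded M m v u θ) : ∫ x, u x 0 ^ 4 ≤ 4 * M ^ 4 := by
  have b : SliceBounds 0 M v u θ := SliceBounds.of_H1 hM.le fun t ht => by
    have : t = 0 := le_antisymm ht.2 ht.1
    rw [this]; exact hI.1
  have ht : (0 : ℝ) ∈ Icc (0 : ℝ) 0 := ⟨le_rfl, le_rfl⟩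
  have h1 := integral_mono (h.integrable_u4 b ht)
    ((h.mu b ht).integrable_sq.const_mul (4 * M ^ 2)) fun x => by
      have h2 := pow_le_pow_left₀ (abs_nonneg _) (h.abs_u_le b ht x) 2
      rw [sq_abs] at h2
      have h3 := mul_le_mul_of_nonneg_right h2 (sq_nonneg (u x 0))
      show u x 0 ^ 4 ≤ 4 * M ^ 2 * u x 0 ^ 2
      linarith
  rw [integral_const_mul] at h1
  have h2 := integral_sq_le_of_eLpNorm (h.mu b ht) hM.le (b.bu 0 ht)
  have h3 := mul_le_mul_of_nonneg_left h2 (show 0 ≤ 4 * M ^ 2 by positivity)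
  linarith

end IsClassicalSolution

/-- fourth-power velocity estimate. -/
theorem fourth_power_velocity_estimate
    (μ κ R cv M m K : ℝ) (hμ : 0 < μ) (hκ : 0 < κ) (hR : 0 < R) (hcv : 0 < cv)
    (hM : 0 < M) (hm : 0 < m) (hK : 1 ≤ K) :
    ∃ C : ℝ, 0 < C ∧
      ∀ v u θ : ℝ → ℝ → ℝ,
        IsClassicalSolution μ κ R cv v u θ →
        InitBounded M m v u θ →
        VolBounded K v →
        ∀ T : ℝ, 0 < T →
          (⨆ t ∈ Icc (0 : ℝ) T, ∫⁻ x : ℝ, ENNReal.ofReal (u x t ^ 4))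
            + (∫⁻ t in Icc (0 : ℝ) T, ∫⁻ x : ℝ,
                ENNReal.ofReal (u x t ^ 2 * pdx u x t ^ 2))
          ≤ ENNReal.ofReal C
            + ENNReal.ofReal C * (∫⁻ t in Icc (0 : ℝ) T, ∫⁻ x : ℝ,
                ENNReal.ofReal (pdx u x t ^ 2))
            + ENNReal.ofReal C * (∫⁻ t in Icc (0 : ℝ) T,
                ⨆ x : ℝ, ENNReal.ofReal (max (θ x t - 3 / 2) 0 ^ 2)) := by
  have hK0 : 0 < K := by linarith
  obtain ⟨E, hE⟩ : ∃ E, E = M ^ 2 / 2 + R * (m⁻¹ * M ^ 2) + cv * (m⁻¹ * M ^ 2) := ⟨_, rfl⟩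
  have hE0 : 0 ≤ E := by rw [hE]; positivity
  obtain ⟨C₁, hC₁⟩ : ∃ C₁, C₁ = 12 * R ^ 2 * K ^ 3 / μ * E := ⟨_, rfl⟩
  obtain ⟨C₂, hC₂⟩ : ∃ C₂, C₂ = 6 * R * K * (8 * E ^ 2 * (10 / cv + (4 * K + 4) / R) + 1) :=
    ⟨_, rfl⟩
  have hC₁0 : 0 ≤ C₁ := by rw [hC₁]; positivity
  have hC₂0 : 0 ≤ C₂ := by rw [hC₂]; positivity
  -- `L` accounts for the coefficient `6 μ / K` of the dissipation integral.
  obtain ⟨L, hL⟩ : ∃ L, L = 1 + (6 * μ / K)⁻¹ := ⟨_, rfl⟩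
  have hL0 : 0 < L := by rw [hL]; positivity
  refine ⟨L * (4 * M ^ 4 + C₁ + C₂), by positivity, ?_⟩
  intro v u θ h hI hv T hT
  obtain ⟨B, b⟩ := h.sliceBounds hT.le
  obtain ⟨c, hc, hθ⟩ := h.exists_lower b hT hcv hK hv
  have hEt : ∀ t ∈ Icc (0 : ℝ) T, ∫ x, energy R cv v u θ x t ≤ E := fun t ht =>
    (h.energy_le b hT hμ hκ hcv hK hv hc hθ ht).trans
      (hE ▸ h.energy_zero_le hR hcv hM hm hI)
  have key := fun τ (hτ : τ ∈ Icc 0 T) => h.fourth_power_integrated b hT hμ hR hcv hK hv hc hθ hE0 hEt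
    (h.integral_u4_zero_le hM hI) hτ
  rw [← hC₁, ← hC₂] at key
  set N := ∫⁻ t in Icc (0 : ℝ) T, ∫⁻ x : ℝ, ENNReal.ofReal (pdx u x t ^ 2) with hN
  set A := ∫⁻ t in Icc (0 : ℝ) T, ⨆ x : ℝ, ENNReal.ofReal (max (θ x t - 3 / 2) 0 ^ 2) with hA
  set X := ENNReal.ofReal (4 * M ^ 4) + ENNReal.ofReal C₂ * N + ENNReal.ofReal C₁ * A with hX
  have d0 : ∀ t, 0 ≤ ∫ x, u x t ^ 2 * pdx u x t ^ 2 := fun t =>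
    integral_nonneg fun x => by positivity
  have part1 : (⨆ t ∈ Icc (0 : ℝ) T, ∫⁻ x : ℝ, ENNReal.ofReal (u x t ^ 4)) ≤ X := by
    refine iSup₂_le fun t ht => ?_
    rw [← ofReal_integral_eq_lintegral_ofReal (h.integrable_u4 b ht)
      (ae_of_all _ fun x => by positivity)]
    refine (ENNReal.ofReal_le_ofReal ?_).trans (key t ht)
    have : 0 ≤ ∫ s in Ioc 0 t, ∫ x, u x s ^ 2 * pdx u x s ^ 2 := integral_nonneg fun s => d0 s
    exact le_add_of_nonneg_right (by positivity)
  have gD : IntegrableOn (fun t => ∫ x, u x t ^ 2 * pdx u x t ^ 2) (Icc 0 T) := by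
    have : Integrable (fun p : ℝ × ℝ => u p.1 p.2 ^ 2 * pdx u p.1 p.2 ^ 2) (slab T) :=
      (MemLp.integrable_sq (h.suux b)).congr (ae_of_all _ fun p => by simp only; ring)
    exact this.integral_prod_right
  have part2 : (∫⁻ t in Icc (0 : ℝ) T, ∫⁻ x : ℝ, ENNReal.ofReal (u x t ^ 2 * pdx u x t ^ 2))
      ≤ ENNReal.ofReal (6 * μ / K)⁻¹ * X := by
    have e1 : (∫⁻ t in Icc (0 : ℝ) T, ∫⁻ x : ℝ, ENNReal.ofReal (u x t ^ 2 * pdx u x t ^ 2))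
        = ENNReal.ofReal (∫ t in Ioc 0 T, ∫ x, u x t ^ 2 * pdx u x t ^ 2) := by
      rw [← integral_Icc_eq_integral_Ioc,
        ofReal_integral_eq_lintegral_ofReal gD (ae_of_all _ fun t => d0 t)]
      refine setLIntegral_congr_fun measurableSet_Icc fun t ht => ?_
      exact (ofReal_integral_eq_lintegral_ofReal (h.integrable_u2ux2 b ht)
        (ae_of_all _ fun x => by positivity)).symm
    rw [e1]
    have e2 : (∫ t in Ioc 0 T, ∫ x, u x t ^ 2 * pdx u x t ^ 2) = (6 * μ / K)⁻¹
        * (6 * μ / K * ∫ t in Ioc 0 T, ∫ x, u x t ^ 2 * pdx u x t ^ 2) := by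
      field_simp
    rw [e2, ENNReal.ofReal_mul (by positivity)]
    refine mul_le_mul_right ((ENNReal.ofReal_le_ofReal ?_).trans (key T ⟨hT.le, le_rfl⟩)) _
    have : 0 ≤ ∫ x, u x T ^ 4 := integral_nonneg fun x => by positivity
    exact le_add_of_nonneg_left this
  calc _ ≤ X + ENNReal.ofReal (6 * μ / K)⁻¹ * X := add_le_add part1 part2
    _ = ENNReal.ofReal L * X := by
        rw [hL, ENNReal.ofReal_add zero_le_one (by positivity), ENNReal.ofReal_one, add_mul, one_mul]
    _ = ENNReal.ofReal (L * (4 * M ^ 4)) + ENNReal.ofReal (L * C₂) * N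
          + ENNReal.ofReal (L * C₁) * A := by
        rw [hX, mul_add, mul_add, ← mul_assoc, ← mul_assoc, ← ENNReal.ofReal_mul hL0.le,
          ← ENNReal.ofReal_mul hL0.le, ← ENNReal.ofReal_mul hL0.le]
    _ ≤ _ := by
        have hM4 : 0 ≤ M ^ 4 := by positivity
        gcongr <;> linarith
end

section
/- Let θ : ℝ → (0,∞) be continuously differentiable with θ(x) → 1 as |x| → ∞, and suppose that ∫_{{θ > 3/2}} θ(x) dx < ∞ and ∫_{{θ > 3/2}} θ'(x)²/θ(x) dx < ∞, where {θ > 3/2} := {x ∈ ℝ : θ(x) > 3/2}. Then sup_{x ∈ ℝ} ((θ(x) − 3/2)₊)² ≤ ( ∫_{{θ > 3/2}} θ'(x)²/θ(x) dx ) · ( ∫_{{θ > 3/2}} θ(x) dx ). -/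
open MeasureTheory Filter Set

/-!
At a point `x` with `θ x > 3/2`, let `a < x` be the last point to the left of `x` where `θ ≤ 3/2`;
it exists because `θ → 1` at infinity. Then `(a, x] ⊆ {θ > 3/2}`, and
`θ x - 3/2 ≤ θ x - θ a = ∫ θ'` over `(a, x]`, which is bounded by Cauchy–Schwarz applied to
`θ' = (θ' / √θ) · √θ`. Cauchy–Schwarz is carried out through the discriminant of the quadratic
`t ↦ ∫ (t θ' + θ)² / θ ≥ 0`.
-/

/-- pointwise bound for the positive part of `θ - 3/2` in terms of
integrals over the set `{θ > 3/2}`. -/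
theorem sup_positive_part_sq_le
    (θ : ℝ → ℝ) (hpos : ∀ x : ℝ, 0 < θ x) (hsm : ContDiff ℝ 1 θ)
    (hlim : Tendsto θ (cocompact ℝ) (nhds 1))
    (h1 : IntegrableOn θ {x : ℝ | 3 / 2 < θ x})
    (h2 : IntegrableOn (fun x => deriv θ x ^ 2 / θ x) {x : ℝ | 3 / 2 < θ x}) :
    ∀ x : ℝ, max (θ x - 3 / 2) 0 ^ 2 ≤
      (∫ x in {x : ℝ | 3 / 2 < θ x}, deriv θ x ^ 2 / θ x)
        * ∫ x in {x : ℝ | 3 / 2 < θ x}, θ x := by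
  intro x
  have hA : 0 ≤ ∫ x in {x : ℝ | 3 / 2 < θ x}, deriv θ x ^ 2 / θ x :=
    integral_nonneg fun y => div_nonneg (sq_nonneg _) (hpos y).le
  have hB : 0 ≤ ∫ x in {x : ℝ | 3 / 2 < θ x}, θ x := integral_nonneg fun y => (hpos y).le
  rcases le_or_gt (θ x) (3 / 2) with hx | hx
  · rw [max_eq_right (by linarith)]
    simpa using mul_nonneg hA hB
  have hc : Continuous θ := hsm.continuous
  have hc' : Continuous (deriv θ) := hsm.continuous_deriv le_rfl
  obtain ⟨y, hyx, hy⟩ : ∃ y ≤ x, θ y ≤ 3 / 2 := by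
    have hbot : Tendsto θ atBot (nhds 1) := hlim.mono_left atBot_le_cocompact
    have hev := hbot.eventually (eventually_le_nhds (show (1 : ℝ) < 3 / 2 by norm_num))
    exact ((eventually_le_atBot x).and hev).exists
  obtain ⟨a, ⟨⟨-, hax⟩, ha⟩, hmax⟩ : ∃ a, IsGreatest (Icc y x ∩ {z | θ z ≤ 3 / 2}) a :=
    (isCompact_Icc.inter_right (isClosed_le hc continuous_const)).exists_isGreatest
      ⟨y, ⟨le_rfl, hyx⟩, hy⟩
  have hya : y ≤ a := hmax ⟨⟨le_rfl, hyx⟩, hy⟩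
  have hsub : Ioc a x ⊆ {x : ℝ | 3 / 2 < θ x} := by
    intro z hz
    by_contra hcon
    have hz' : θ z ≤ 3 / 2 := not_lt.1 hcon
    exact absurd (hmax ⟨⟨hya.trans hz.1.le, hz.2⟩, hz'⟩) (not_le.2 hz.1)
  have hD : ∫ z in Ioc a x, deriv θ z = θ x - θ a := by
    rw [← intervalIntegral.integral_of_le hax]
    exact intervalIntegral.integral_deriv_eq_sub
      (fun z _ => (hsm.differentiable one_ne_zero) z) (hc'.intervalIntegrable _ _)
  have hquad : ∀ t : ℝ, 0 ≤ (∫ x in {x : ℝ | 3 / 2 < θ x}, deriv θ x ^ 2 / θ x) * (t * t)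
      + (2 * (θ x - θ a)) * t + ∫ x in {x : ℝ | 3 / 2 < θ x}, θ x := by
    intro t
    have hint : IntegrableOn (fun z => t ^ 2 * (deriv θ z ^ 2 / θ z) + θ z)
        {x : ℝ | 3 / 2 < θ x} := (h2.const_mul (t ^ 2)).add h1
    have hS : ∫ z in {x : ℝ | 3 / 2 < θ x}, (t ^ 2 * (deriv θ z ^ 2 / θ z) + θ z)
        = t ^ 2 * (∫ x in {x : ℝ | 3 / 2 < θ x}, deriv θ x ^ 2 / θ x)
          + ∫ x in {x : ℝ | 3 / 2 < θ x}, θ x := by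
      rw [integral_add (h2.const_mul (t ^ 2)) h1, integral_const_mul]
    have hmono : ∫ z in Ioc a x, (t ^ 2 * (deriv θ z ^ 2 / θ z) + θ z)
        ≤ ∫ z in {x : ℝ | 3 / 2 < θ x}, (t ^ 2 * (deriv θ z ^ 2 / θ z) + θ z) := by
      refine setIntegral_mono_set hint (ae_of_all _ fun z => ?_) hsub.eventuallyLE
      have := hpos z
      show 0 ≤ t ^ 2 * (deriv θ z ^ 2 / θ z) + θ z
      positivity
    have hlow : ∫ z in Ioc a x, (-2 * t) * deriv θ z
        ≤ ∫ z in Ioc a x, (t ^ 2 * (deriv θ z ^ 2 / θ z) + θ z) := by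
      refine integral_mono ((hc'.integrableOn_Ioc).const_mul _) (hint.mono_set hsub) fun z => ?_
      have hz := hpos z
      have hsq : 0 ≤ (t * deriv θ z + θ z) ^ 2 / θ z := by positivity
      have heq : (t * deriv θ z + θ z) ^ 2 / θ z
          = t ^ 2 * (deriv θ z ^ 2 / θ z) + θ z - (-2 * t) * deriv θ z := by
        field_simp
        ring
      show (-2 * t) * deriv θ z ≤ t ^ 2 * (deriv θ z ^ 2 / θ z) + θ z
      linarith
    rw [integral_const_mul, hD] at hlow
    linarith
  have hdisc := discrim_le_zero hquad
  rw [discrim] at hdisc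
  rw [max_eq_left (by linarith)]
  have ha' : θ a ≤ 3 / 2 := ha
  have hle : (θ x - 3 / 2) ^ 2 ≤ (θ x - θ a) ^ 2 :=
    pow_le_pow_left₀ (by linarith) (by linarith) 2
  linarith
end
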